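/- For every integer n ≥ 36, both N2(4,8,n) < N2(0,8,n) and N2(3,8,n) < N2(1,8,n) hold. -/

import Mathlib

open scoped Classical

/-- The M2-rank of a partition: ⌈ℓ/2⌉ − s, where ℓ is the largest part
(0 for the empty partition) and s is the number of parts. -/
def m2Rank {n : ℕ} (P : n.Partition) : ℤ :=
  (((P.parts.sup + 1) / 2 : ℕ) : ℤ) - (Multiset.card P.parts : ℤ)

/-- A partition has no repeated odd parts. -/
def NoRepeatedOddParts {n : ℕ} (P : n.Partition) : Prop :=
  ∀ j : ℕ, Odd j → P.parts.count j ≤ 1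

/-- `N2 r m n` is the number of partitions of `n` without repeated odd parts whose
M2-rank is congruent to `r` modulo `m`. -/
noncomputable def N2 (r : ℤ) (m n : ℕ) : ℕ :=
  Nat.card {P : n.Partition // NoRepeatedOddParts P ∧ m2Rank P ≡ r [ZMOD (m : ℤ)]}

def GoodMS (s : Multiset ℕ) : Prop := 0 ∉ s ∧ ∀ j, Odd j → s.count j ≤ 1

def rkMS (s : Multiset ℕ) : ℤ := (((s.sup + 1) / 2 : ℕ) : ℤ) - (Multiset.card s : ℤ)

noncomputable def FS (n : ℤ) : Finset (Multiset ℕ) :=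
  if 0 ≤ n then ((Finset.univ : Finset (n.toNat.Partition)).image (fun P => P.parts)).filter GoodMS
  else ∅

theorem mem_FS (s : Multiset ℕ) (n : ℤ) : s ∈ FS n ↔ GoodMS s ∧ (s.sum : ℤ) = n := by
  unfold FS
  split_ifs with h
  · simp only [Finset.mem_filter, Finset.mem_image, Finset.mem_univ, true_and]
    constructor
    · rintro ⟨⟨P, rfl⟩, hg⟩
      refine ⟨hg, ?_⟩
      rw [P.parts_sum]; omega
    · rintro ⟨hg, hs⟩
      refine ⟨⟨⟨s, ?_, ?_⟩, rfl⟩, hg⟩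
      · intro i hi
        rcases Nat.eq_zero_or_pos i with h0 | h0
        · subst h0; exact absurd hi hg.1
        · exact h0
      · omega
  · simp only [Finset.notMem_empty, false_iff]
    rintro ⟨_, h2⟩
    omega

theorem rk_le_iff (s : Multiset ℕ) (m : ℤ) : rkMS s ≤ m ↔
    0 ≤ m + Multiset.card s ∧ ∀ x ∈ s, (x : ℤ) ≤ 2 * (m + Multiset.card s) := by
  unfold rkMS
  constructor
  · intro h
    refine ⟨by omega, fun x hx => ?_⟩
    have := Multiset.le_sup hx
    omega
  · rintro ⟨h0, h⟩
    have : s.sup ≤ (2 * (m + Multiset.card s)).toNat := by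
      rw [Multiset.sup_le]
      intro x hx
      have := h x hx
      omega
    omega

def buildMS (R : Multiset ℕ) (a e : ℕ) : Multiset ℕ :=
  R.map (· + 2) + (Multiset.replicate a 2 + Multiset.replicate e 1)

theorem card_build (R : Multiset ℕ) (a e : ℕ) :
    Multiset.card (buildMS R a e) = Multiset.card R + a + e := by
  simp [buildMS]; ring

theorem sum_build (R : Multiset ℕ) (a e : ℕ) :
    (buildMS R a e).sum = R.sum + 2 * Multiset.card R + 2 * a + e := by
  simp [buildMS, Multiset.sum_map_add]; ring

theorem mem_build (R : Multiset ℕ) (a e x : ℕ) : x ∈ buildMS R a e ↔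
    (∃ y ∈ R, y + 2 = x) ∨ (a ≠ 0 ∧ x = 2) ∨ (e ≠ 0 ∧ x = 1) := by
  simp [buildMS, Multiset.mem_replicate]

theorem one_mem_build (R : Multiset ℕ) (a e : ℕ) : 1 ∈ buildMS R a e ↔ e ≠ 0 := by
  rw [mem_build]; simp

theorem count_build_one (R : Multiset ℕ) (a e : ℕ) : (buildMS R a e).count 1 = e := by
  simp [buildMS, Multiset.count_replicate]

theorem count_build_big (R : Multiset ℕ) (a e j : ℕ) (hj : j ≠ 0) :
    (buildMS R a e).count (j + 2) = R.count j := by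
  have : Multiset.count (j + 2) (R.map (· + 2)) = R.count j :=
    Multiset.count_map_eq_count' _ _ (add_left_injective 2) j
  simp only [buildMS, Multiset.count_add, this, Multiset.count_replicate]
  rw [if_neg (by omega), if_neg (by omega)]
  simp

theorem good_build (R : Multiset ℕ) (a e : ℕ) (he : e ≤ 1) (hR : GoodMS R) :
    GoodMS (buildMS R a e) := by
  refine ⟨?_, ?_⟩
  · rw [mem_build]; simp
  · intro j hj
    by_cases h1 : j = 1
    · subst h1; rw [count_build_one]; exact he
    · obtain ⟨k, rfl⟩ : ∃ k, j = k + 2 := ⟨j - 2, by rcases hj with ⟨t, rfl⟩; omega⟩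
      have hk : k ≠ 0 := by rintro rfl; exact absurd hj (by decide)
      rw [count_build_big _ _ _ _ hk]
      apply hR.2
      rcases hj with ⟨t, ht⟩
      exact ⟨t - 1, by omega⟩

theorem exists_build (P : Multiset ℕ) (hP : GoodMS P) :
    ∃ R a e, e ≤ 1 ∧ GoodMS R ∧ P = buildMS R a e := by
  refine ⟨(P.filter (2 < ·)).map (· - 2), P.count 2, P.count 1, hP.2 1 (by decide), ?_, ?_⟩
  · have key : ∀ j, j ≠ 0 → Multiset.count j ((P.filter (2 < ·)).map (· - 2)) = P.count (j + 2) := by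
      intro j hj
      rw [Multiset.count_map, Multiset.filter_filter, Multiset.count, Multiset.countP_eq_card_filter]
      congr 1
      apply Multiset.filter_congr
      intro x hx
      omega
    refine ⟨?_, ?_⟩
    · simp only [Multiset.mem_map, Multiset.mem_filter, not_exists, not_and]
      intro x hx; omega
    · intro j hj
      rw [key j (by rcases hj with ⟨t, rfl⟩; omega)]
      apply hP.2
      rcases hj with ⟨t, rfl⟩
      exact ⟨t + 1, by ring⟩
  · ext x
    rcases x with _ | _ | _ | x
    · rw [Multiset.count_eq_zero_of_notMem hP.1, Multiset.count_eq_zero_of_notMem]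
      rw [mem_build]; simp
    · rw [count_build_one]
    · have : Multiset.count 2 (((P.filter (2 < ·)).map (· - 2)).map (· + 2)) = 0 := by
        rw [Multiset.count_eq_zero]; simp; intros; omega
      simp only [buildMS, Multiset.count_add, Multiset.count_replicate]
      simp only [zero_add, Nat.reduceAdd]
      rw [this]; simp
    · rw [show x + 1 + 1 + 1 = (x + 1) + 2 by ring, count_build_big _ _ _ _ (by omega)]
      rw [Multiset.count_map, Multiset.filter_filter, Multiset.count, Multiset.countP_eq_card_filter]
      congr 1
      apply Multiset.filter_congr
      intro y hy
      omega

noncomputable def fMap (m : ℤ) (P : Multiset ℕ) : Multiset ℕ :=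
  ((if 1 ∈ P then 2 * (Multiset.card P : ℤ) - 2 + 2 * m
    else 2 * (Multiset.card P : ℤ) + 2 * m - 1).toNat ::ₘ P.map (· - 2)).filter (0 < ·)

noncomputable def gMap (m : ℤ) (Q : Multiset ℕ) : Multiset ℕ :=
  buildMS (Q.erase Q.sup)
    ((((Q.sup + 1) / 2 : ℕ) : ℤ) - m - Multiset.card (Q.erase Q.sup)).toNat
    (if Even Q.sup then 1 else 0)

theorem filter_build (R : Multiset ℕ) (a e : ℕ) (he : e ≤ 1) (hR : GoodMS R) :
    ((buildMS R a e).map (· - 2)).filter (0 < ·) = R := by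
  have h1 : (R.map (fun x => x + 2 - 2)) = R := by simp
  have h2 : R.filter (0 < ·) = R := by
    rw [Multiset.filter_eq_self]
    intro x hx
    rcases Nat.eq_zero_or_pos x with h | h
    · subst h; exact absurd hx hR.1
    · exact h
  simp only [buildMS, Multiset.map_add, Multiset.map_map, Function.comp_def, h1, Multiset.map_replicate,
    Multiset.filter_add, h2]
  have h3 : ∀ k, (Multiset.replicate k (0:ℕ)).filter (0 < ·) = 0 := by
    intro k
    rw [Multiset.filter_eq_nil]
    intro x hx
    have := Multiset.eq_of_mem_replicate hx
    omega
  simp [h3]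

theorem fMap_build (m : ℤ) (R : Multiset ℕ) (a e : ℕ) (he : e ≤ 1) (hR : GoodMS R) (l : ℕ)
    (hl : (l : ℤ) = 2 * (Multiset.card R + a + m) - 1 + e) :
    fMap m (buildMS R a e) = if l = 0 then R else l ::ₘ R := by
  unfold fMap
  have : (if 1 ∈ buildMS R a e then 2 * (Multiset.card (buildMS R a e) : ℤ) - 2 + 2 * m
    else 2 * (Multiset.card (buildMS R a e) : ℤ) + 2 * m - 1).toNat = l := by
    rw [card_build]
    by_cases h : e = 0
    · subst h
      rw [if_neg (by rw [one_mem_build]; simp)]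
      push_cast at *; omega
    · have : e = 1 := by omega
      subst this
      rw [if_pos (by rw [one_mem_build]; simp)]
      push_cast at *; omega
  rw [this, Multiset.filter_cons, filter_build R a e he hR]
  by_cases h : l = 0
  · simp [h]
  · rw [if_pos (by omega), if_neg h, Multiset.singleton_add]

theorem sup_cons_eq (l : ℕ) (R : Multiset ℕ) (h : ∀ x ∈ R, x ≤ l) : (l ::ₘ R).sup = l := by
  rw [Multiset.sup_cons]
  apply sup_eq_left.2
  exact Multiset.sup_le.2 h

theorem gMap_cons (m : ℤ) (l : ℕ) (R : Multiset ℕ) (h : ∀ x ∈ R, x ≤ l) :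
    gMap m (l ::ₘ R) = buildMS R ((((l + 1) / 2 : ℕ) : ℤ) - m - Multiset.card R).toNat
      (if Even l then 1 else 0) := by
  unfold gMap
  rw [sup_cons_eq l R h, Multiset.erase_cons_head]

theorem gMap_zero (m : ℤ) : gMap m 0 = buildMS 0 (-m).toNat 1 := by
  unfold gMap
  simp

theorem rk_cons (l : ℕ) (R : Multiset ℕ) (h : ∀ x ∈ R, x ≤ l) :
    rkMS (l ::ₘ R) = (((l + 1) / 2 : ℕ) : ℤ) - (Multiset.card R + 1) := by
  unfold rkMS
  rw [sup_cons_eq l R h]; simp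

theorem good_cons (l : ℕ) (R : Multiset ℕ) (hl : l ≠ 0) (hR : GoodMS R) (h : Odd l → l ∉ R) :
    GoodMS (l ::ₘ R) := by
  refine ⟨by simp [Ne.symm hl, hR.1], fun j hj => ?_⟩
  rw [Multiset.count_cons]
  split_ifs with h1
  · subst h1
    rw [Multiset.count_eq_zero_of_notMem (h hj)]
  · have := hR.2 j hj; omega

theorem exists_cons (Q : Multiset ℕ) (hQ : GoodMS Q) (h0 : Q ≠ 0) :
    ∃ l R, l ≠ 0 ∧ GoodMS R ∧ (∀ x ∈ R, x ≤ l) ∧ (Odd l → l ∉ R) ∧ Q = l ::ₘ R := by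
  have hm : Q.sup ∈ Q := by
    have : ∀ s : Multiset ℕ, s ≠ 0 → s.sup ∈ s := by
      intro s
      induction s using Multiset.induction with
      | empty => simp
      | cons a s ih =>
        intro _
        by_cases hs : s = 0
        · subst hs; simp
        · have := ih hs
          rw [Multiset.sup_cons]
          rcases le_total a s.sup with h | h
          · rw [sup_eq_right.2 h]; exact Multiset.mem_cons_of_mem this
          · rw [sup_eq_left.2 h]; exact Multiset.mem_cons_self _ _
    exact this Q h0
  have hE : Q = Q.sup ::ₘ Q.erase Q.sup := (Multiset.cons_erase hm).symm
  refine ⟨Q.sup, Q.erase Q.sup, ?_, ?_, ?_, ?_, hE⟩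
  · intro h; rw [h] at hm; exact hQ.1 hm
  · refine ⟨fun h => hQ.1 (Multiset.mem_of_mem_erase h), fun j hj => ?_⟩
    exact le_trans (Multiset.count_le_of_le _ (Multiset.erase_le _ _)) (hQ.2 j hj)
  · intro x hx; exact Multiset.le_sup (Multiset.mem_of_mem_erase hx)
  · intro ho hx
    have h1 := hQ.2 _ ho
    have h2 := Multiset.count_erase_self Q.sup Q
    have h3 := Multiset.count_pos.2 hx
    omega

theorem good_zero : GoodMS 0 := ⟨by simp, by simp⟩

theorem key_card (m n : ℤ) :
    ((FS (n - 2 * m)).filter (fun P => rkMS P ≤ m ∧ ¬ (P = 0 ∧ m = 0))).card =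
    ((FS (n - 1)).filter (fun Q => m - 1 ≤ rkMS Q ∧ ¬ (Q = 0 ∧ m = 1))).card := by
  have fwd : ∀ P, GoodMS P → (P.sum : ℤ) = n - 2 * m → rkMS P ≤ m → ¬ (P = 0 ∧ m = 0) →
      (GoodMS (fMap m P) ∧ ((fMap m P).sum : ℤ) = n - 1 ∧ m - 1 ≤ rkMS (fMap m P) ∧
        ¬ (fMap m P = 0 ∧ m = 1)) ∧ gMap m (fMap m P) = P := by
    intro P hP hs hr h0
    obtain ⟨R, a, e, he, hR, rfl⟩ := exists_build P hP
    rw [rk_le_iff, card_build] at hr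
    obtain ⟨hr0, hr1⟩ := hr
    rw [sum_build] at hs
    push_cast at hs hr0 hr1
    have hx : ∀ x ∈ R, ((x:ℤ) + 2) ≤ 2 * (m + (Multiset.card R + a + e)) := by
      intro x hx
      have := hr1 (x + 2) (by rw [mem_build]; exact Or.inl ⟨x, hx, rfl⟩)
      push_cast at this; exact this
    have hpos : 0 ≤ 2 * (Multiset.card R + a + m) - 1 + (e:ℤ) := by
      by_cases h1 : e = 0
      · subst h1
        by_cases hP0 : buildMS R a 0 = 0
        · have : m ≠ 0 := fun h => h0 ⟨hP0, h⟩
          have hc := card_build R a 0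
          rw [hP0] at hc
          simp at hc
          omega
        · obtain ⟨x, hx⟩ := Multiset.exists_mem_of_ne_zero hP0
          have h2 := hr1 x hx
          have : x ≠ 0 := by rintro rfl; exact hP.1 hx
          omega
      · have h2 := hr1 1 (by rw [one_mem_build]; exact h1)
        omega
    obtain ⟨l, hl⟩ := Int.eq_ofNat_of_zero_le hpos
    rw [fMap_build m R a e he hR l hl.symm]
    have hRl : ∀ x ∈ R, x ≤ l := by
      intro x hxR
      have := hx x hxR
      omega
    by_cases hl0 : l = 0
    · rw [if_pos hl0]
      have hR0 : R = 0 := by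
        apply Multiset.eq_zero_of_forall_notMem
        intro x hxR
        have := hRl x hxR
        have h3 : x = 0 := by omega
        subst h3; exact hR.1 hxR
      subst hR0
      simp only [Multiset.card_zero, Multiset.sum_zero] at *
      have he1 : e = 1 := by omega
      subst he1
      refine ⟨⟨hR, by simp at hs; omega, ?_, ?_⟩, ?_⟩
      · simp [rkMS]; omega
      · rintro ⟨_, h⟩; omega
      · rw [gMap_zero]; congr 1; omega
    · rw [if_neg hl0]
      refine ⟨⟨?_, ?_, ?_, ?_⟩, ?_⟩
      · apply good_cons l R hl0 hR
        intro hodd hmem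
        have := hx l hmem
        obtain ⟨t, ht⟩ := hodd
        omega
      · rw [Multiset.sum_cons]; push_cast; omega
      · rw [rk_cons l R hRl]; omega
      · rintro ⟨h, _⟩; exact Multiset.cons_ne_zero h
      · rw [gMap_cons m l R hRl]
        by_cases h1 : Even l
        · rw [if_pos h1]; obtain ⟨t, ht⟩ := h1
          have : e = 1 := by omega
          subst this; congr 1; omega
        · rw [if_neg h1]
          rw [Nat.not_even_iff_odd] at h1; obtain ⟨t, ht⟩ := h1
          have : e = 0 := by omega
          subst this; congr 1; omega
  have bwd : ∀ Q, GoodMS Q → (Q.sum : ℤ) = n - 1 → m - 1 ≤ rkMS Q → ¬ (Q = 0 ∧ m = 1) →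
      (GoodMS (gMap m Q) ∧ ((gMap m Q).sum : ℤ) = n - 2 * m ∧ rkMS (gMap m Q) ≤ m ∧
        ¬ (gMap m Q = 0 ∧ m = 0)) ∧ fMap m (gMap m Q) = Q := by
    intro Q hQ hs hr h0
    by_cases hQ0 : Q = 0
    · subst hQ0
      have hm : m ≤ 0 := by
        simp [rkMS] at hr
        have : m ≠ 1 := fun h => h0 ⟨rfl, h⟩
        omega
      rw [gMap_zero]
      refine ⟨⟨good_build _ _ _ le_rfl hQ, ?_, ?_, ?_⟩, ?_⟩
      · rw [sum_build]; simp at hs ⊢; omega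
      · rw [rk_le_iff, card_build]
        simp only [mem_build]
        refine ⟨by simp; omega, ?_⟩
        rintro x (⟨y, hy, _⟩ | ⟨ha, rfl⟩ | ⟨_, rfl⟩)
        · simp at hy
        · simp; omega
        · simp; omega
      · rintro ⟨h, _⟩
        have := card_build 0 (-m).toNat 1
        rw [h] at this; simp at this
      · rw [fMap_build m 0 _ 1 le_rfl hQ 0 (by simp; omega)]; simp
    · obtain ⟨l, R, hl0, hR, hRl, hodd, rfl⟩ := exists_cons Q hQ hQ0
      rw [rk_cons l R hRl] at hr
      rw [gMap_cons m l R hRl]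
      rw [Multiset.sum_cons] at hs
      push_cast at hs
      set a := ((((l + 1) / 2 : ℕ) : ℤ) - m - Multiset.card R).toNat with ha
      have ha' : (a : ℤ) = (((l + 1) / 2 : ℕ) : ℤ) - m - Multiset.card R := by omega
      set e := (if Even l then 1 else 0) with he
      have he' : e ≤ 1 := by rw [he]; split_ifs <;> omega
      have hle : (l : ℤ) = 2 * (((l + 1) / 2 : ℕ) : ℤ) - 1 + e := by
        rw [he]
        split_ifs with h1
        · obtain ⟨t, ht⟩ := h1; push_cast; omega
        · rw [Nat.not_even_iff_odd] at h1; obtain ⟨t, ht⟩ := h1; push_cast; omega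
      refine ⟨⟨good_build _ _ _ he' hR, ?_, ?_, ?_⟩, ?_⟩
      · rw [sum_build]; push_cast; omega
      · rw [rk_le_iff, card_build]
        simp only [mem_build]
        refine ⟨by push_cast; omega, ?_⟩
        rintro x (⟨y, hy, rfl⟩ | ⟨_, rfl⟩ | ⟨_, rfl⟩)
        · have := hRl y hy
          push_cast
          by_cases h1 : Even l
          · have : e = 1 := by rw [he, if_pos h1]
            omega
          · have h2 : y ≠ l := by
              rintro rfl; exact hodd (Nat.not_even_iff_odd.1 h1) hy
            omega
        · push_cast; omega
        · push_cast; omega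
      · rintro ⟨h, hm⟩
        have := card_build R a e
        rw [h] at this; simp at this
        omega
      · rw [fMap_build m R a e he' hR l (by omega), if_neg hl0]
  apply Finset.card_nbij' (fMap m) (gMap m)
  · intro P hP
    simp only [Finset.coe_filter, Set.mem_ofPred_eq, mem_FS] at hP ⊢
    obtain ⟨h, _⟩ := fwd P hP.1.1 hP.1.2 hP.2.1 hP.2.2
    exact ⟨⟨h.1, h.2.1⟩, h.2.2⟩
  · intro P hP
    simp only [Finset.coe_filter, Set.mem_ofPred_eq, mem_FS] at hP ⊢
    obtain ⟨h, _⟩ := bwd P hP.1.1 hP.1.2 hP.2.1 hP.2.2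
    exact ⟨⟨h.1, h.2.1⟩, h.2.2⟩
  · intro P hP
    simp only [Finset.coe_filter, Set.mem_ofPred_eq, mem_FS] at hP
    exact (fwd P hP.1.1 hP.1.2 hP.2.1 hP.2.2).2
  · intro P hP
    simp only [Finset.coe_filter, Set.mem_ofPred_eq, mem_FS] at hP
    exact (bwd P hP.1.1 hP.1.2 hP.2.1 hP.2.2).2

noncomputable def pp (n : ℤ) : ℤ := ∑ _s ∈ FS n, (1 : ℤ)
noncomputable def gg (m n : ℤ) : ℤ := ∑ s ∈ FS n, if rkMS s ≤ m then (1 : ℤ) else 0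
noncomputable def hh (m n : ℤ) : ℤ := ∑ s ∈ FS n, if m < rkMS s then (1 : ℤ) else 0

theorem gg_add_hh (m n : ℤ) : gg m n + hh m n = pp n := by
  unfold gg hh pp
  rw [← Finset.sum_add_distrib]
  apply Finset.sum_congr rfl
  intro s _
  by_cases h : rkMS s ≤ m
  · rw [if_pos h, if_neg (by omega)]; rfl
  · rw [if_neg h, if_pos (by omega)]; rfl

theorem FS_neg (n : ℤ) (hn : n < 0) : FS n = ∅ := by
  unfold FS; rw [if_neg (by omega)]

theorem pp_neg (n : ℤ) (hn : n < 0) : pp n = 0 := by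
  unfold pp; rw [FS_neg n hn]; rfl
theorem gg_neg (m n : ℤ) (hn : n < 0) : gg m n = 0 := by
  unfold gg; rw [FS_neg n hn]; rfl
theorem hh_neg (m n : ℤ) (hn : n < 0) : hh m n = 0 := by
  unfold hh; rw [FS_neg n hn]; rfl

theorem zero_mem_FS (n : ℤ) : (0 : Multiset ℕ) ∈ FS n ↔ n = 0 := by
  rw [mem_FS]; simp [good_zero, eq_comm]

theorem rk_zero : rkMS 0 = 0 := by simp [rkMS]

theorem key_gh (m n : ℤ) : gg m (n - 2 * m) = hh (m - 2) (n - 1)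
    + (if m = 0 ∧ n = 0 then 1 else 0) - (if m = 1 ∧ n = 1 then 1 else 0) := by
  have h := key_card m n
  have h1 : gg m (n - 2 * m) =
      (((FS (n - 2 * m)).filter (fun P => rkMS P ≤ m ∧ ¬ (P = 0 ∧ m = 0))).card : ℤ)
      + (if m = 0 ∧ n = 0 then 1 else 0) := by
    have : (if m = 0 ∧ n = 0 then (1:ℤ) else 0) =
        ∑ P ∈ FS (n - 2 * m), if P = 0 then (if m = 0 then 1 else 0) else 0 := by
      rw [Finset.sum_ite_eq' (FS (n - 2*m)) 0 (fun _ => if m = 0 then (1:ℤ) else 0)]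
      simp only [zero_mem_FS]
      by_cases hm : m = 0
      · subst hm; simp
      · simp [hm]
    rw [this, Finset.card_filter]
    unfold gg
    push_cast
    rw [← Finset.sum_add_distrib]
    apply Finset.sum_congr rfl
    intro P _
    by_cases hP : P = 0
    · subst hP
      rw [rk_zero]
      by_cases hm : m = 0
      · simp [hm]
      · simp [hm]
    · simp [hP]
  have h2 : hh (m - 2) (n - 1) =
      (((FS (n - 1)).filter (fun Q => m - 1 ≤ rkMS Q ∧ ¬ (Q = 0 ∧ m = 1))).card : ℤ)
      + (if m = 1 ∧ n = 1 then 1 else 0) := by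
    have : (if m = 1 ∧ n = 1 then (1:ℤ) else 0) =
        ∑ P ∈ FS (n - 1), if P = 0 then (if m = 1 then 1 else 0) else 0 := by
      rw [Finset.sum_ite_eq' (FS (n - 1)) 0 (fun _ => if m = 1 then (1:ℤ) else 0)]
      simp only [zero_mem_FS]
      by_cases hm : m = 1
      · subst hm; simp [sub_eq_zero]
      · simp [hm]
    rw [this, Finset.card_filter]
    unfold hh
    push_cast
    rw [← Finset.sum_add_distrib]
    apply Finset.sum_congr rfl
    intro P _
    have e : (m - 2 < rkMS P) ↔ (m - 1 ≤ rkMS P) := by omega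
    by_cases hP : P = 0
    · subst hP
      simp only [rk_zero]
      by_cases hm : m = 1
      · simp [hm]
      · simp [hm]
    · simp [hP, e]
  rw [h1, h2, h]; ring

theorem pp_mono (n : ℤ) : pp (n - 1) ≤ pp n := by
  unfold pp
  simp only [Finset.sum_const, nsmul_eq_mul, mul_one]
  norm_cast
  have hc : ∀ s, GoodMS s → 1 ∈ s → 1 ∉ s.erase 1 := by
    intro s hs h1 h2
    have := hs.2 1 (by decide)
    have h3 := Multiset.count_erase_self 1 s
    have h4 := Multiset.count_pos.2 h2
    omega
  apply Finset.card_le_card_of_injOn (fun s => if 1 ∈ s then 2 ::ₘ s.erase 1 else 1 ::ₘ s)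
  · intro s hs
    have hs' := (mem_FS _ _).1 hs
    obtain ⟨hg, hsum⟩ := hs'
    simp only [Finset.mem_coe]
    rw [mem_FS]
    split_ifs with h1
    · refine ⟨?_, ?_⟩
      · apply good_cons 2 _ (by norm_num)
        · refine ⟨fun h => hg.1 (Multiset.mem_of_mem_erase h), fun j hj => ?_⟩
          exact le_trans (Multiset.count_le_of_le _ (Multiset.erase_le _ _)) (hg.2 j hj)
        · intro h; exact absurd h (by decide)
      · have := congrArg Multiset.sum (Multiset.cons_erase h1)
        rw [Multiset.sum_cons] at this ⊢
        push_cast [← this] at hsum ⊢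
        linarith
    · refine ⟨good_cons 1 s (by norm_num) hg (fun _ => h1), ?_⟩
      rw [Multiset.sum_cons]; push_cast at hsum ⊢; linarith
  · intro s hs t ht hst
    have hs' := ((mem_FS _ _).1 hs).1
    have ht' := ((mem_FS _ _).1 ht).1
    simp only at hst
    split_ifs at hst with h1 h2 h2
    · have := (Multiset.cons_inj_right 2).1 hst
      rw [← Multiset.cons_erase h1, ← Multiset.cons_erase h2, this]
    · exfalso
      have : 1 ∈ 2 ::ₘ s.erase 1 := by rw [hst]; simp
      rw [Multiset.mem_cons] at this
      rcases this with h | h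
      · omega
      · exact hc s hs' h1 h
    · exfalso
      have : 1 ∈ 2 ::ₘ t.erase 1 := by rw [← hst]; simp
      rw [Multiset.mem_cons] at this
      rcases this with h | h
      · omega
      · exact hc t ht' h2 h
    · exact (Multiset.cons_inj_right 1).1 hst

theorem pp_zero : pp 0 = 1 := by
  unfold pp
  have : FS 0 = {0} := by
    ext s
    rw [mem_FS, Finset.mem_singleton]
    constructor
    · rintro ⟨hg, hs⟩
      apply Multiset.eq_zero_of_forall_notMem
      intro x hx
      have h1 := Multiset.le_sum_of_mem hx
      have : x = 0 := by omega
      subst this; exact hg.1 hx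
    · rintro rfl; exact ⟨good_zero, by simp⟩
  rw [this]; simp

/-! symmetry -/
theorem symm_nonneg (N : ℕ) : ∀ (n u : ℤ), n < N → 0 ≤ u → hh u n = gg (-1 - u) n := by
  induction N with
  | zero => intro n u hn _; rw [hh_neg _ _ (by simpa using hn), gg_neg _ _ (by simpa using hn)]
  | succ N ih =>
    intro n u hn hu
    have h1 := key_gh (u + 2) (n + 1)
    have h2 := key_gh (-1 - u) (n - 2 - 2 * u)
    rw [if_neg (by omega), if_neg (by omega)] at h1 h2
    have h3 := ih (n - 2 * u - 3) (u + 2) (by push_cast at hn; omega) (by omega)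
    have h4 := gg_add_hh (u + 2) (n - 2 * u - 3)
    have h5 := gg_add_hh (-1 - u - 2) (n - 2 * u - 3)
    rw [show n + 1 - 2 * (u + 2) = n - 2 * u - 3 by ring, show u + 2 - 2 = u by ring,
      show n + 1 - 1 = n by ring] at h1
    rw [show n - 2 - 2 * u - 2 * (-1 - u) = n by ring,
      show n - 2 - 2 * u - 1 = n - 2 * u - 3 by ring] at h2
    rw [show -1 - (u + 2) = -1 - u - 2 by ring] at h3
    linarith

theorem hh_symm (u n : ℤ) : hh u n = gg (-1 - u) n := by
  rcases le_or_gt 0 u with h | h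
  · exact symm_nonneg (n.toNat + 1) n u (by omega) h
  · have h1 := symm_nonneg (n.toNat + 1) n (-1 - u) (by omega) (by omega)
    rw [show -1 - (-1 - u) = u by ring] at h1
    have h2 := gg_add_hh u n
    have h3 := gg_add_hh (-1 - u) n
    linarith

/-! signs and finsums -/
def sg (k : ℤ) : ℤ := if k % 2 = 0 then 1 else -1
def et (k : ℤ) : ℤ := if k % 4 = 0 ∨ k % 4 = 1 then 1 else -1

theorem sg_one_sub (k : ℤ) : sg (1 - k) = - sg k := by
  unfold sg; split_ifs <;> omega
theorem sg_succ (k : ℤ) : sg (k + 1) = - sg k := by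
  unfold sg; split_ifs <;> omega
theorem et_add_two (k : ℤ) : et (k + 2) = - et k := by
  unfold et; split_ifs <;> omega

theorem fin_supp (B : ℤ) (F : ℤ → ℤ) (h : ∀ k, k < -B ∨ B < k → F k = 0) :
    (Function.support F).Finite := by
  apply (Set.finite_Icc (-B) B).subset
  intro k hk
  rw [Function.mem_support] at hk
  by_contra h2
  rw [Set.mem_Icc] at h2
  exact hk (h k (by omega))

theorem tri_lt (n k : ℤ) (h : k < -(|n| + 3) ∨ |n| + 3 < k) : n < 2 * k * (k - 1) ∧ n < k * (k - 1) / 2 := by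
  have h0 := le_abs_self n
  have h0' := abs_nonneg n
  have key : 2 * (|n| + 1) ≤ k * (k - 1) := by
    rcases h with h | h <;> nlinarith
  constructor
  · nlinarith
  · omega

theorem fin2 (n : ℤ) (c : ℤ → ℤ) (F : ℤ → ℤ → ℤ) (hF : ∀ k, ∀ x < 0, F k x = 0) :
    (Function.support (fun k => c k * F k (n - 2 * k * (k - 1)))).Finite := by
  apply fin_supp (|n| + 3)
  intro k hk
  have := tri_lt n k hk
  rw [hF k _ (by linarith), mul_zero]

theorem fin1 (n : ℤ) (c : ℤ → ℤ) (F : ℤ → ℤ → ℤ) (hF : ∀ k, ∀ x < 0, F k x = 0) :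
    (Function.support (fun k => c k * F k (n - k * (k - 1) / 2))).Finite := by
  apply fin_supp (|n| + 3)
  intro k hk
  have := tri_lt n k hk
  rw [hF k _ (by linarith), mul_zero]

theorem fin_shift (F : ℤ → ℤ) (c : ℤ) (h : (Function.support F).Finite) :
    (Function.support (fun k => F (k + c))).Finite :=
  h.preimage (f := fun k => k + c) (fun a _ b _ hab => by simpa using hab)

theorem finsum_shift (F : ℤ → ℤ) (c : ℤ) : ∑ᶠ k, F (k + c) = ∑ᶠ k, F k :=
  finsum_comp_equiv (Equiv.addRight c)

theorem finsum_refl (F : ℤ → ℤ) : ∑ᶠ k, F (1 - k) = ∑ᶠ k, F k :=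
  finsum_comp_equiv (Equiv.subLeft 1)

theorem alt_pp (n : ℤ) : ∑ᶠ k, sg k * pp (n - 2 * k * (k - 1)) = 0 := by
  have h := finsum_refl (fun k => sg k * pp (n - 2 * k * (k - 1)))
  have h2 : ∑ᶠ k, sg (1 - k) * pp (n - 2 * (1 - k) * ((1 - k) - 1)) =
      - ∑ᶠ k, sg k * pp (n - 2 * k * (k - 1)) := by
    rw [← finsum_neg_distrib]
    apply finsum_congr
    intro k
    rw [sg_one_sub, show n - 2 * (1 - k) * ((1 - k) - 1) = n - 2 * k * (k - 1) by ring]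
    ring
  linarith

noncomputable def ww (m n : ℤ) : ℤ := ∑ᶠ k, sg k * gg (m - 2 * k) (n - 2 * k * (k - 1))

theorem ww_hh (m n : ℤ) : ww m n = - ∑ᶠ k, sg k * hh (m - 2 * k) (n - 2 * k * (k - 1)) := by
  have h := alt_pp n
  have h2 : ∑ᶠ k, sg k * pp (n - 2 * k * (k - 1)) = ww m n +
      ∑ᶠ k, sg k * hh (m - 2 * k) (n - 2 * k * (k - 1)) := by
    unfold ww
    rw [← finsum_add_distrib (fin2 n sg (fun k x => gg (m - 2 * k) x) (fun k x hx => gg_neg _ x hx))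
      (fin2 n sg (fun k x => hh (m - 2 * k) x) (fun k x hx => hh_neg _ x hx))]
    apply finsum_congr
    intro k
    rw [← gg_add_hh (m - 2 * k)]; ring
  linarith

theorem ww_symm (m n : ℤ) : ww (1 - m) n = ww m n := by
  rw [ww_hh m n, ← finsum_refl, ← finsum_neg_distrib]
  unfold ww
  apply finsum_congr
  intro k
  rw [sg_one_sub, hh_symm, show -1 - (m - 2 * (1 - k)) = 1 - m - 2 * k by ring,
    show n - 2 * (1 - k) * ((1 - k) - 1) = n - 2 * k * (k - 1) by ring]
  ring

theorem ww_neg (m n : ℤ) (hn : n < 0) : ww m n = 0 := by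
  unfold ww
  rw [finsum_eq_zero_of_forall_eq_zero]
  intro k
  rw [gg_neg, mul_zero]
  have : 0 ≤ k * (k - 1) := by
    rcases le_or_gt k 0 with h | h <;> nlinarith
  linarith

theorem ww_rec (m n : ℤ) : ww m (n - 2 * m) = ww m (n - 1) +
    ∑ᶠ k, sg k * ((if m - 2 * k = 0 ∧ n - 2 * k * (k + 1) = 0 then 1 else 0)
      - (if m - 2 * k = 1 ∧ n - 2 * k * (k + 1) = 1 then 1 else 0)) := by
  rw [ww_hh m (n - 1), ← finsum_shift _ 1, ← finsum_neg_distrib]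
  have hA := fin_shift _ 1 (fin2 (n - 1) sg (fun k x => hh (m - 2 * k) x) (fun k x hx => hh_neg _ x hx))
  have hB : (Function.support (fun k => sg k * ((if m - 2 * k = 0 ∧ n - 2 * k * (k + 1) = 0 then 1 else 0)
      - (if m - 2 * k = 1 ∧ n - 2 * k * (k + 1) = 1 then (1:ℤ) else 0)))).Finite := by
    apply fin_supp (|m| + 1)
    intro k hk
    have h0 := le_abs_self m
    have h0' := neg_abs_le m
    rw [if_neg (by omega), if_neg (by omega)]; ring
  rw [← finsum_add_distrib (by
    apply hA.subset
    intro k hk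
    rw [Function.mem_support] at hk ⊢
    intro h; apply hk
    rw [h, neg_zero]) hB]
  · unfold ww
    apply finsum_congr
    intro k
    have h := key_gh (m - 2 * k) (n - 2 * k * (k + 1))
    rw [show n - 2 * k * (k + 1) - 2 * (m - 2 * k) = n - 2 * m - 2 * k * (k - 1) by ring] at h
    rw [h, sg_succ, show m - 2 * (k + 1) = m - 2 * k - 2 by ring,
      show n - 1 - 2 * (k + 1) * (k + 1 - 1) = n - 2 * k * (k + 1) - 1 by ring]
    ring

theorem rec_solve (F : ℤ → ℤ) (f e c : ℤ) (hf : 1 ≤ f) (he : 0 ≤ e) (h0 : ∀ N < 0, F N = 0)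
    (hr : ∀ N, F N = F (N - f) + if N = e then c else 0) (N : ℤ) :
    F N = if e ≤ N ∧ f ∣ N - e then c else 0 := by
  have : ∀ M : ℕ, ∀ N : ℤ, N < M → F N = if e ≤ N ∧ f ∣ N - e then c else 0 := by
    intro M
    induction M with
    | zero => intro N hN; rw [h0 N (by simpa using hN), if_neg]; rintro ⟨h, _⟩; push_cast at hN; omega
    | succ M ih =>
      intro N hN
      rw [hr N, ih (N - f) (by push_cast at hN; omega)]
      have hd : f ∣ N - f - e ↔ f ∣ N - e := by
        rw [show N - f - e = N - e - f by ring]; exact dvd_sub_self_right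
      simp only [hd]
      by_cases h1 : N = e
      · subst h1
        rw [if_neg (by omega), if_pos rfl, if_pos ⟨le_rfl, by simp⟩]; ring
      · rw [if_neg h1, add_zero]
        congr 1
        apply propext
        constructor
        · rintro ⟨h2, h3⟩; exact ⟨by omega, h3⟩
        · rintro ⟨h2, h3⟩
          refine ⟨?_, h3⟩
          have := Int.le_of_dvd (by omega) h3
          omega
  exact this (N.toNat + 1) N (by omega)

theorem ww_even (j N : ℤ) (hj : 1 ≤ j) : ww (2 * j) N =
    if 2 * j * j + 2 * j - 1 ≤ N ∧ (4 * j - 1) ∣ N - (2 * j * j + 2 * j - 1) then - sg j else 0 := by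
  apply rec_solve (ww (2 * j)) (4 * j - 1) (2 * j * j + 2 * j - 1) (- sg j) (by omega) (by nlinarith)
    (fun N hN => ww_neg _ _ hN)
  intro N
  have h := ww_rec (2 * j) (N + 1)
  rw [finsum_eq_single _ j (by
    intro k hk
    rw [if_neg (by omega), if_neg (by omega)]; ring)] at h
  rw [show N + 1 - 2 * (2 * j) = N - (4 * j - 1) by ring, show N + 1 - 1 = N by ring] at h
  have h1 : ¬ (2 * j - 2 * j = 1 ∧ N + 1 - 2 * j * (j + 1) = 1) := by omega
  rw [if_neg h1] at h
  rw [h]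
  have : (2 * j - 2 * j = 0 ∧ N + 1 - 2 * j * (j + 1) = 0) ↔ N = 2 * j * j + 2 * j - 1 := by
    constructor
    · rintro ⟨_, h⟩; linarith
    · rintro rfl; constructor <;> ring
  by_cases hN : N = 2 * j * j + 2 * j - 1
  · rw [if_pos (this.2 hN), if_pos hN]; ring
  · rw [if_neg (fun h => hN (this.1 h)), if_neg hN]; ring

theorem ww_odd (j N : ℤ) (hj : 0 ≤ j) : ww (2 * j + 1) N =
    if 2 * j * j + 2 * j ≤ N ∧ (4 * j + 1) ∣ N - (2 * j * j + 2 * j) then sg j else 0 := by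
  apply rec_solve (ww (2 * j + 1)) (4 * j + 1) (2 * j * j + 2 * j) (sg j) (by omega) (by nlinarith)
    (fun N hN => ww_neg _ _ hN)
  intro N
  have h := ww_rec (2 * j + 1) (N + 1)
  rw [finsum_eq_single _ j (by
    intro k hk
    rw [if_neg (by omega), if_neg (by omega)]; ring)] at h
  rw [show N + 1 - 2 * (2 * j + 1) = N - (4 * j + 1) by ring, show N + 1 - 1 = N by ring] at h
  have h1 : ¬ (2 * j + 1 - 2 * j = 0 ∧ N + 1 - 2 * j * (j + 1) = 0) := by omega
  rw [if_neg h1] at h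
  rw [h]
  have : (2 * j + 1 - 2 * j = 1 ∧ N + 1 - 2 * j * (j + 1) = 1) ↔ N = 2 * j * j + 2 * j := by
    constructor
    · rintro ⟨_, h⟩; linarith
    · rintro rfl; constructor <;> ring
  by_cases hN : N = 2 * j * j + 2 * j
  · rw [if_pos (this.2 hN), if_pos hN]; ring
  · rw [if_neg (fun h => hN (this.1 h)), if_neg hN]; ring

theorem tri_add_two (k : ℤ) : (k + 2) * (k + 2 - 1) / 2 = k * (k - 1) / 2 + 2 * k + 1 := by
  rw [show (k + 2) * (k + 2 - 1) = k * (k - 1) + (2 * k + 1) * 2 by ring,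
    Int.add_mul_ediv_right _ _ (by norm_num)]
  ring

theorem pp_theta (n : ℤ) : ∑ᶠ k, et k * pp (n - k * (k - 1) / 2) = if n = 0 then 2 else 0 := by
  have hA := fin1 n et (fun k x => hh (-k) x) (fun k x hx => hh_neg _ x hx)
  have hA2 := fin_shift _ 2 hA
  let D : ℤ → ℤ := fun k => (if k = 0 ∧ n = 0 then 1 else 0) + (if k = -1 ∧ n = 0 then 1 else 0)
  have hD : (Function.support D).Finite := by
    apply fin_supp 2
    intro k hk
    simp only [D]
    rw [if_neg (by omega), if_neg (by omega)]; ring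
  have hDs : ∑ᶠ k, D k = if n = 0 then 2 else 0 := by
    rw [finsum_eq_sum_of_support_subset (s := {0, -1})]
    · rw [Finset.sum_pair (by norm_num)]
      simp only [D]
      by_cases hn : n = 0 <;> simp [hn]
    · intro k hk
      rw [Function.mem_support] at hk
      by_contra h
      apply hk
      simp at h
      simp only [D]
      rw [if_neg (by omega), if_neg (by omega)]; ring
  rw [← hDs]
  have e1 : ∀ k, et k * pp (n - k * (k - 1) / 2) =
      (et k * hh (-k) (n - k * (k - 1) / 2) +
        et (k + 2) * hh (-(k + 2)) (n - (k + 2) * (k + 2 - 1) / 2) * (-1)) + D k := by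
    intro k
    have h := key_gh (-k) (n - k * (k - 1) / 2 - 2 * k)
    rw [show n - k * (k - 1) / 2 - 2 * k - 2 * -k = n - k * (k - 1) / 2 by ring] at h
    rw [tri_add_two, et_add_two, ← gg_add_hh (-k), h,
      show n - (k * (k - 1) / 2 + 2 * k + 1) = n - k * (k - 1) / 2 - 2 * k - 1 by ring,
      show -(k + 2) = -k - 2 by ring]
    have d1 : et k * ((if -k = 0 ∧ n - k * (k - 1) / 2 - 2 * k = 0 then 1 else 0) -
      (if -k = 1 ∧ n - k * (k - 1) / 2 - 2 * k = 1 then 1 else 0)) = D k := by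
      simp only [D]
      by_cases h0 : k = 0
      · subst h0; simp [et]
      · by_cases h1 : k = -1
        · subst h1
          simp [et]
          by_cases hn : n = 0
          · simp [hn]
          · rw [if_neg hn, if_neg (by omega), neg_zero]
        · rw [if_neg (by omega), if_neg (by omega), if_neg (by omega), if_neg (by omega)]; ring
    rw [← d1]; ring
  rw [finsum_congr e1]
  have hA3 : (Function.support (fun k =>
      et (k + 2) * hh (-(k + 2)) (n - (k + 2) * (k + 2 - 1) / 2) * (-1))).Finite := by
    apply hA2.subset
    intro k hk
    rw [Function.mem_support] at hk ⊢
    intro h; apply hk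
    rw [h, zero_mul]
  rw [finsum_add_distrib _ hD, finsum_add_distrib hA hA3]
  · have s1 := finsum_shift (fun k => et k * hh (-k) (n - k * (k - 1) / 2)) 2
    rw [← finsum_mul, s1]
    ring
  · exact (hA.union hA3).subset (Function.support_add _ _)

noncomputable def TT (f : ℤ → ℤ) (n : ℤ) : ℤ := ∑ s ∈ FS n, f (rkMS s)

theorem TT_neg (f : ℤ → ℤ) (n : ℤ) (hn : n < 0) : TT f n = 0 := by
  unfold TT; rw [FS_neg n hn]; rfl

theorem rk_bound (s : Multiset ℕ) (n : ℤ) (hs : s ∈ FS n) : 0 ≤ n ∧ -n ≤ rkMS s ∧ rkMS s ≤ n := by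
  obtain ⟨hg, hsum⟩ := (mem_FS s n).1 hs
  have h1 : s.sup ≤ s.sum := Multiset.sup_le.2 (fun x hx => Multiset.le_sum_of_mem hx)
  have h2 : Multiset.card s ≤ s.sum := by
    have := Multiset.card_nsmul_le_sum (s := s) (a := 1) (fun x hx => by
      rcases Nat.eq_zero_or_pos x with h0 | h0
      · subst h0; exact absurd hx hg.1
      · exact h0)
    simpa using this
  unfold rkMS
  omega

theorem tele_nat (a : ℤ → ℤ) (c : ℤ) (d : ℕ) :
    ∑ m ∈ Finset.Ico c (c + d), (a m - a (m + 1)) = a c - a (c + d) := by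
  induction d with
  | zero => simp
  | succ d ih =>
    have : Finset.Ico c (c + (d + 1 : ℕ)) = insert (c + d) (Finset.Ico c (c + d)) := by
      ext x; simp only [Finset.mem_Ico, Finset.mem_insert]; push_cast; omega
    rw [this, Finset.sum_insert (by simp), ih]
    push_cast
    rw [← add_assoc]; ring

theorem tele (a : ℤ → ℤ) (A B c : ℤ) (h1 : A ≤ c) (h2 : c ≤ B) :
    ∑ m ∈ Finset.Ico A B, (a m - a (m + 1)) * (if c ≤ m then 1 else 0) = a c - a B := by
  obtain ⟨d, rfl⟩ : ∃ d : ℕ, B = c + d := ⟨(B - c).toNat, by omega⟩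
  rw [← tele_nat a c d]
  simp only [mul_ite, mul_one, mul_zero]
  rw [← Finset.sum_filter]
  apply Finset.sum_congr _ (fun _ _ => rfl)
  ext x; simp only [Finset.mem_filter, Finset.mem_Ico]; omega

theorem finsum_Icc (B : ℤ) (F : ℤ → ℤ) (h : ∀ k, k < -B ∨ B < k → F k = 0) :
    ∑ᶠ k, F k = ∑ k ∈ Finset.Icc (-B) B, F k := by
  apply finsum_eq_sum_of_support_subset
  intro k hk
  rw [Function.mem_support] at hk
  by_contra h2
  simp only [Finset.coe_Icc, Set.mem_Icc] at h2
  exact hk (h k (by omega))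

theorem E1 (a : ℤ → ℤ) (n L : ℤ) (hL : 3 * n + 10 ≤ L) :
    ∑ᶠ k, sg k * TT (fun r => a (r + 2 * k)) (n - 2 * k * (k - 1)) =
    ∑ m ∈ Finset.Ico (1 - L) (L + 1), (a m - a (m + 1)) * ww m n := by
  have hz : ∀ k, k < -(|n| + 3) ∨ |n| + 3 < k → n - 2 * k * (k - 1) < 0 := by
    intro k hk; have := tri_lt n k hk; linarith
  have hw : ∀ m, ww m n = ∑ k ∈ Finset.Icc (-(|n| + 3)) (|n| + 3),
      sg k * gg (m - 2 * k) (n - 2 * k * (k - 1)) := by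
    intro m
    unfold ww
    apply finsum_Icc
    intro k hk
    rw [gg_neg _ _ (hz k hk), mul_zero]
  have hp := alt_pp n
  rw [finsum_Icc (|n| + 3) _ (by intro k hk; rw [pp_neg _ (hz k hk), mul_zero])] at hp
  rw [finsum_Icc (|n| + 3) _ (by intro k hk; rw [TT_neg _ _ (hz k hk), mul_zero])]
  simp only [hw, Finset.mul_sum]
  rw [Finset.sum_comm]
  have step : ∀ k ∈ Finset.Icc (-(|n| + 3)) (|n| + 3),
      ∑ m ∈ Finset.Ico (1 - L) (L + 1), (a m - a (m + 1)) *
        (sg k * gg (m - 2 * k) (n - 2 * k * (k - 1))) =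
      sg k * TT (fun r => a (r + 2 * k)) (n - 2 * k * (k - 1)) -
        a (L + 1) * (sg k * pp (n - 2 * k * (k - 1))) := by
    intro k _
    have : ∑ m ∈ Finset.Ico (1 - L) (L + 1), (a m - a (m + 1)) *
        gg (m - 2 * k) (n - 2 * k * (k - 1)) =
        TT (fun r => a (r + 2 * k)) (n - 2 * k * (k - 1)) -
        a (L + 1) * pp (n - 2 * k * (k - 1)) := by
      unfold gg TT pp
      simp only [Finset.mul_sum]
      rw [Finset.sum_comm, ← Finset.sum_sub_distrib]
      apply Finset.sum_congr rfl
      intro s hs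
      have hb := rk_bound s _ hs
      have hk1 : -n ≤ 2 * k ∧ 2 * k ≤ n + 2 := by
        rcases le_or_gt k 0 with h | h
        · constructor <;> nlinarith
        · rcases le_or_gt k 1 with h' | h'
          · have : k = 1 := by omega
            subst this; omega
          · constructor <;> nlinarith
      have hk2 : 0 ≤ 2 * k * (k - 1) := by
        rcases le_or_gt k 0 with h | h <;> nlinarith
      have ht := tele a (1 - L) (L + 1) (rkMS s + 2 * k) (by linarith) (by linarith)
      rw [mul_one, ← ht]
      apply Finset.sum_congr rfl
      intro m _
      congr 1
      by_cases h : rkMS s ≤ m - 2 * k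
      · rw [if_pos h, if_pos (by linarith)]
      · rw [if_neg h, if_neg (by intro h'; exact h (by linarith))]
    calc _ = sg k * ∑ m ∈ Finset.Ico (1 - L) (L + 1), (a m - a (m + 1)) *
        gg (m - 2 * k) (n - 2 * k * (k - 1)) := by
          rw [Finset.mul_sum]; apply Finset.sum_congr rfl; intro m _; ring
      _ = _ := by rw [this]; ring
  rw [Finset.sum_congr rfl step, Finset.sum_sub_distrib, ← Finset.mul_sum, hp]
  ring

theorem anti4 (χ : ℤ → ℤ) (h : ∀ m, χ (m + 4) = - χ m) (i : ℤ) : ∀ m, χ (m + 4 * i) = sg i * χ m := by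
  induction i using Int.induction_on with
  | zero => intro m; simp [sg]
  | succ i ih =>
    intro m
    rw [show m + 4 * ((i : ℤ) + 1) = (m + 4 * i) + 4 by ring, h, ih, sg_succ]; ring
  | pred i ih =>
    intro m
    have h1 := h (m + 4 * (-(i : ℤ) - 1))
    rw [show m + 4 * (-(i : ℤ) - 1) + 4 = m + 4 * -(i : ℤ) by ring, ih] at h1
    have h2 := sg_succ (-(i : ℤ) - 1)
    rw [show -(i : ℤ) - 1 + 1 = -(i : ℤ) by ring] at h2
    rw [h2] at h1; linarith

theorem et_two (i : ℤ) : et (2 * i) = sg i ∧ et (2 * i + 1) = sg i ∧ sg (2 * i) = 1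
    ∧ sg (2 * i + 1) = -1 ∧ sg (-i) = sg i := by
  unfold et sg
  refine ⟨?_, ?_, ?_, ?_, ?_⟩ <;> split_ifs <;> omega

theorem et_key (χ : ℤ → ℤ) (h : ∀ m, χ (m + 4) = - χ m) (k r : ℤ) :
    sg k * ((χ (r + 2 * k) + χ (r + 2 * k + 2)) - (χ (r + 2 * (1 - k)) + χ (r + 2 * (1 - k) + 2)))
     = et k * (2 * χ r) := by
  obtain ⟨i, rfl | rfl⟩ : ∃ i, k = 2 * i ∨ k = 2 * i + 1 := ⟨k / 2, by omega⟩
  · obtain ⟨e1, -, e2, -, e3⟩ := et_two i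
    rw [e1, e2, show r + 2 * (2 * i) = r + 4 * i by ring,
      show r + 4 * i + 2 = r + 2 + 4 * i by ring,
      show r + 2 * (1 - 2 * i) = r + 2 + 4 * (-i) by ring,
      show r + 2 + 4 * (-i) + 2 = r + 4 + 4 * (-i) by ring]
    simp only [anti4 χ h, h, e3]; ring
  · obtain ⟨-, e1, -, e2, e3⟩ := et_two i
    rw [e1, e2, show r + 2 * (2 * i + 1) = r + 2 + 4 * i by ring,
      show r + 2 + 4 * i + 2 = r + 4 + 4 * i by ring,
      show r + 2 * (1 - (2 * i + 1)) = r + 4 * (-i) by ring,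
      show r + 4 * (-i) + 2 = r + 2 + 4 * (-i) by ring]
    simp only [anti4 χ h, h, e3]; ring

theorem E1s (χ : ℤ → ℤ) (h : ∀ m, χ (m + 4) = - χ m) (n L : ℤ) (hL : 3 * n + 10 ≤ L) :
    ∑ᶠ k, et k * TT χ (n - 2 * k * (k - 1)) =
    ∑ m ∈ Finset.Ico (1 - L) (L + 1),
      ((χ m + χ (m + 2)) - (χ (m + 1) + χ (m + 1 + 2))) * ww m n := by
  rw [← E1 (fun m => χ m + χ (m + 2)) n L hL]
  have hr := finsum_refl (fun k => sg k * TT (fun r => χ (r + 2 * k) + χ (r + 2 * k + 2)) (n - 2 * k * (k - 1)))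
  have hs : 2 * ∑ᶠ k, et k * TT χ (n - 2 * k * (k - 1)) =
      ∑ᶠ k, sg k * TT (fun r => χ (r + 2 * k) + χ (r + 2 * k + 2)) (n - 2 * k * (k - 1)) +
      ∑ᶠ k, sg (1 - k) * TT (fun r => χ (r + 2 * (1 - k)) + χ (r + 2 * (1 - k) + 2))
        (n - 2 * (1 - k) * (1 - k - 1)) := by
    rw [← finsum_add_distrib, mul_finsum]
    · apply finsum_congr
      intro k
      rw [sg_one_sub, show n - 2 * (1 - k) * (1 - k - 1) = n - 2 * k * (k - 1) by ring]
      unfold TT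
      simp only [Finset.mul_sum]
      rw [← Finset.sum_add_distrib]
      apply Finset.sum_congr rfl
      intro s _
      have := et_key χ h k (rkMS s)
      linarith
    · exact fin2 n sg (fun k x => TT (fun r => χ (r + 2 * k) + χ (r + 2 * k + 2)) x) (fun k x hx => TT_neg _ x hx)
    · have := fin2 n (fun k => sg (1 - k)) (fun k x => TT (fun r => χ (r + 2 * (1 - k)) + χ (r + 2 * (1 - k) + 2)) x) (fun k x hx => TT_neg _ x hx)
      apply this.subset
      intro k hk
      rw [Function.mem_support] at hk ⊢
      rwa [show n - 2 * (1 - k) * (1 - k - 1) = n - 2 * k * (k - 1) by ring] at hk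
  linarith

def emm (m : ℤ) : ℤ := if m % 2 = 0 then m * m / 2 + m - 1 else (m * m - 1) / 2
def sgw (m : ℤ) : ℤ := if m % 4 = 1 ∨ m % 4 = 2 then 1 else -1
def ind (f N : ℤ) : ℤ := if 0 ≤ N ∧ f ∣ N then 1 else 0

theorem emm_even (j : ℤ) : emm (2 * j) = 2 * j * j + 2 * j - 1 := by
  unfold emm
  rw [if_pos (by omega), show 2 * j * (2 * j) = 2 * (2 * j * j) by ring,
    Int.mul_ediv_cancel_left _ (by norm_num)]
theorem emm_odd (j : ℤ) : emm (2 * j + 1) = 2 * j * j + 2 * j := by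
  unfold emm
  rw [if_neg (by omega), show (2 * j + 1) * (2 * j + 1) - 1 = 2 * (2 * j * j + 2 * j) by ring,
    Int.mul_ediv_cancel_left _ (by norm_num)]

theorem ww_ind (m n : ℤ) (hm : 1 ≤ m) : ww m n = sgw m * ind (2 * m - 1) (n - emm m) := by
  obtain ⟨i, rfl | rfl⟩ : ∃ i, m = 2 * i ∨ m = 2 * i + 1 := ⟨m / 2, by omega⟩
  · rw [ww_even i n (by omega), emm_even, show 2 * (2 * i) - 1 = 4 * i - 1 by ring]
    have : sgw (2 * i) = - sg i := by unfold sgw sg; split_ifs <;> omega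
    rw [this]
    unfold ind
    simp only [sub_nonneg, mul_ite, mul_one, mul_zero]
  · rw [ww_odd i n (by omega), emm_odd, show 2 * (2 * i + 1) - 1 = 4 * i + 1 by ring]
    have : sgw (2 * i + 1) = sg i := by unfold sgw sg; split_ifs <;> omega
    rw [this]
    unfold ind
    simp only [sub_nonneg, mul_ite, mul_one, mul_zero]

noncomputable def SS (θ : ℤ → ℤ) (L n : ℤ) : ℤ := ∑ m ∈ Finset.Ico 1 (L + 1), θ m * ind (2 * m - 1) (n - emm m)

theorem E1S (χ θ : ℤ → ℤ) (h : ∀ m, χ (m + 4) = - χ m)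
    (hθ : ∀ m, (((χ m + χ (m + 2)) - (χ (m + 1) + χ (m + 1 + 2))) +
      ((χ (1 - m) + χ (1 - m + 2)) - (χ (1 - m + 1) + χ (1 - m + 1 + 2)))) * sgw m = 2 * θ m)
    (n L : ℤ) (hL0 : 0 ≤ L) (hL : 3 * n + 10 ≤ L) :
    ∑ᶠ k, et k * TT χ (n - 2 * k * (k - 1)) = 2 * SS θ L n := by
  rw [E1s χ h n L hL]
  have hu : Finset.Ico (1 - L) (L + 1) = Finset.Ico (1 - L) 1 ∪ Finset.Ico 1 (L + 1) := by
    ext x; simp only [Finset.mem_union, Finset.mem_Ico]; omega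
  have hd : Disjoint (Finset.Ico (1 - L) 1) (Finset.Ico 1 (L + 1)) := by
    rw [Finset.disjoint_left]; intro x; simp only [Finset.mem_Ico]; omega
  rw [hu, Finset.sum_union hd]
  have hr : ∑ m ∈ Finset.Ico (1 - L) 1,
      ((χ m + χ (m + 2)) - (χ (m + 1) + χ (m + 1 + 2))) * ww m n =
      ∑ m ∈ Finset.Ico 1 (L + 1),
      ((χ (1 - m) + χ (1 - m + 2)) - (χ (1 - m + 1) + χ (1 - m + 1 + 2))) * ww m n := by
    refine Finset.sum_bij' (fun m _ => 1 - m) (fun m _ => 1 - m) ?_ ?_ ?_ ?_ ?_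
    · intro m hm; simp only [Finset.mem_Ico] at hm ⊢; omega
    · intro m hm; simp only [Finset.mem_Ico] at hm ⊢; omega
    · intro m _; ring
    · intro m _; ring
    · intro m _
      simp only [ww_symm, sub_sub_cancel]
  rw [hr, ← Finset.sum_add_distrib]
  unfold SS
  rw [Finset.mul_sum]
  apply Finset.sum_congr rfl
  intro m hm
  rw [ww_ind m n (Finset.mem_Ico.1 hm).1, ← mul_assoc 2, ← hθ]
  ring

theorem emm_nonneg (m : ℤ) (hm : 1 ≤ m) : 0 ≤ emm m := by
  obtain ⟨i, rfl | rfl⟩ : ∃ i, m = 2 * i ∨ m = 2 * i + 1 := ⟨m / 2, by omega⟩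
  · rw [emm_even]; nlinarith
  · rw [emm_odd]; nlinarith

theorem SS_neg (θ : ℤ → ℤ) (L n : ℤ) (hn : n < 0) : SS θ L n = 0 := by
  unfold SS
  apply Finset.sum_eq_zero
  intro m hm
  have := emm_nonneg m (Finset.mem_Ico.1 hm).1
  unfold ind
  rw [if_neg (by omega), mul_zero]

theorem finsum_Icc0 (n : ℤ) (F : ℤ → ℤ) (h : ∀ k, k < 0 ∨ n < k → F k = 0) :
    ∑ᶠ k, F k = ∑ k ∈ Finset.Icc 0 n, F k := by
  apply finsum_eq_sum_of_support_subset
  intro k hk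
  rw [Function.mem_support] at hk
  by_contra h2
  simp only [Finset.coe_Icc, Set.mem_Icc] at h2
  exact hk (h k (by omega))

theorem inversion (X S : ℤ → ℤ) (n : ℤ) (hn : 0 ≤ n) (hX : ∀ x < 0, X x = 0)
    (hE : ∀ x ≤ n, ∑ᶠ k, et k * X (x - 2 * k * (k - 1)) = 2 * S x) :
    X n = ∑ j ∈ Finset.Icc 0 n, pp j * S (n - 4 * j) := by
  have hz : ∀ k, k < -(|n| + 3) ∨ |n| + 3 < k → ∀ x ≤ n, x - 2 * k * (k - 1) < 0 := by
    intro k hk x hx; have := tri_lt n k hk; linarith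
  have hz' : ∀ k, k < -(|n| + 3) ∨ |n| + 3 < k → ∀ x ≤ n, x - k * (k - 1) / 2 < 0 := by
    intro k hk x hx; have := tri_lt n k hk; linarith
  have htri : ∀ k : ℤ, 0 ≤ k * (k - 1) / 2 ∧ 2 * k * (k - 1) = 4 * (k * (k - 1) / 2) := by
    intro k
    have h1 : 0 ≤ k * (k - 1) := by rcases le_or_gt k 0 with h | h <;> nlinarith
    have h2 : k * (k - 1) % 2 = 0 := by
      have := Int.even_mul_pred_self k
      exact Int.even_iff.1 this
    have h3 : 2 * k * (k - 1) = 2 * (k * (k - 1)) := by ring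
    rw [h3]; omega
  have h2 : 2 * ∑ j ∈ Finset.Icc 0 n, pp j * S (n - 4 * j) = 2 * X n := by
    calc 2 * ∑ j ∈ Finset.Icc 0 n, pp j * S (n - 4 * j)
        = ∑ j ∈ Finset.Icc 0 n, ∑ k ∈ Finset.Icc (-(|n| + 3)) (|n| + 3),
            et k * (pp j * X (n - 4 * (j + k * (k - 1) / 2))) := by
          rw [Finset.mul_sum]
          apply Finset.sum_congr rfl
          intro j hj
          have hj' := Finset.mem_Icc.1 hj
          have := hE (n - 4 * j) (by omega)
          rw [finsum_Icc (|n| + 3) _ (by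
            intro k hk; rw [hX _ (hz k hk _ (by omega)), mul_zero])] at this
          calc 2 * (pp j * S (n - 4 * j)) = pp j * (2 * S (n - 4 * j)) := by ring
            _ = _ := by
              rw [← this, Finset.mul_sum]
              apply Finset.sum_congr rfl
              intro k _
              rw [(htri k).2, show n - 4 * j - 4 * (k * (k - 1) / 2) =
                n - 4 * (j + k * (k - 1) / 2) by ring]
              ring
      _ = ∑ k ∈ Finset.Icc (-(|n| + 3)) (|n| + 3), ∑ t ∈ Finset.Icc 0 n,
            et k * (pp (t - k * (k - 1) / 2) * X (n - 4 * t)) := by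
          rw [Finset.sum_comm]
          apply Finset.sum_congr rfl
          intro k _
          rw [← Finset.mul_sum, ← Finset.mul_sum]
          congr 1
          have hk0 := (htri k).1
          rw [← finsum_Icc0 n (fun j => pp j * X (n - 4 * (j + k * (k - 1) / 2))),
            ← finsum_Icc0 n (fun t => pp (t - k * (k - 1) / 2) * X (n - 4 * t))]
          · rw [← finsum_shift (fun t => pp (t - k * (k - 1) / 2) * X (n - 4 * t)) (k * (k - 1) / 2)]
            apply finsum_congr
            intro j
            rw [add_sub_cancel_right]
          · intro t ht
            rcases ht with ht | ht
            · rw [pp_neg _ (by linarith), zero_mul]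
            · rw [hX _ (by linarith), mul_zero]
          · intro t ht
            rcases ht with ht | ht
            · rw [pp_neg _ (by linarith), zero_mul]
            · rw [hX _ (by linarith), mul_zero]
      _ = ∑ t ∈ Finset.Icc 0 n, X (n - 4 * t) * (if t = 0 then 2 else 0) := by
          rw [Finset.sum_comm]
          apply Finset.sum_congr rfl
          intro t ht
          have ht' := Finset.mem_Icc.1 ht
          rw [← pp_theta t, finsum_Icc (|n| + 3) _ (by
            intro k hk; rw [pp_neg _ (hz' k hk _ (by omega)), mul_zero]), Finset.mul_sum]
          apply Finset.sum_congr rfl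
          intro k _
          ring
      _ = 2 * X n := by
          rw [Finset.sum_eq_single 0]
          · rw [if_pos rfl, mul_zero, sub_zero]; ring
          · intro t _ ht; rw [if_neg ht, mul_zero]
          · intro h; exact absurd (Finset.mem_Icc.2 ⟨le_rfl, hn⟩) h
  linarith

theorem lower (X S G : ℤ → ℤ) (n : ℤ) (hn : 0 ≤ n)
    (hX : X n = ∑ j ∈ Finset.Icc 0 n, pp j * S (n - 4 * j))
    (hG0 : ∀ x < 0, G x = 0) (hGp : ∀ x ≤ n, 0 ≤ G x) (hGS : ∀ x ≤ n, G x - G (x - 4) = S x) :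
    G n ≤ X n := by
  have h1 : X n = ∑ j ∈ Finset.Icc 0 n, pp j * G (n - 4 * j) -
      ∑ j ∈ Finset.Icc 0 n, pp j * G (n - 4 * (j + 1)) := by
    rw [hX, ← Finset.sum_sub_distrib]
    apply Finset.sum_congr rfl
    intro j hj
    have := Finset.mem_Icc.1 hj
    rw [← hGS _ (by omega), show n - 4 * j - 4 = n - 4 * (j + 1) by ring]
    ring
  have h2 : ∑ j ∈ Finset.Icc 0 n, pp j * G (n - 4 * (j + 1)) =
      ∑ j ∈ Finset.Icc 0 n, pp (j - 1) * G (n - 4 * j) := by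
    rw [← finsum_Icc0 n (fun j => pp j * G (n - 4 * (j + 1))),
      ← finsum_Icc0 n (fun j => pp (j - 1) * G (n - 4 * j)),
      ← finsum_shift (fun j => pp (j - 1) * G (n - 4 * j)) 1]
    · apply finsum_congr
      intro j
      rw [add_sub_cancel_right]
    · intro t ht
      rcases ht with ht | ht
      · rw [pp_neg _ (by linarith), zero_mul]
      · rw [hG0 _ (by linarith), mul_zero]
    · intro t ht
      rcases ht with ht | ht
      · rw [pp_neg _ (by linarith), zero_mul]
      · rw [hG0 _ (by linarith), mul_zero]
  rw [h1, h2, ← Finset.sum_sub_distrib]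
  have h3 : G n = pp 0 * G (n - 4 * 0) - pp (0 - 1) * G (n - 4 * 0) := by
    rw [pp_zero, pp_neg _ (by norm_num)]; simp
  rw [h3]
  apply Finset.single_le_sum (f := fun j => pp j * G (n - 4 * j) - pp (j - 1) * G (n - 4 * j))
  · intro j hj
    have hj' := Finset.mem_Icc.1 hj
    have a1 := pp_mono j
    have a2 := hGp (n - 4 * j) (by omega)
    nlinarith
  · exact Finset.mem_Icc.2 ⟨le_rfl, hn⟩

def uf (f N : ℤ) : ℤ := (N - f * ((N * f) % 4)) / 4
def cf (f N : ℤ) : ℤ := if N < 0 then 0 else uf f N / f + 1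

theorem uf_spec (f N : ℤ) (hf : f % 2 = 1) : 4 * uf f N = N - f * ((N * f) % 4) := by
  unfold uf
  apply Int.mul_ediv_cancel'
  apply Int.dvd_of_emod_eq_zero
  have h1 : f % 4 = 1 ∨ f % 4 = 3 := by omega
  have h2 : N % 4 = 0 ∨ N % 4 = 1 ∨ N % 4 = 2 ∨ N % 4 = 3 := by omega
  rw [Int.sub_emod, Int.mul_emod f, Int.emod_emod, Int.mul_emod N]
  rcases h1 with h1 | h1 <;> rcases h2 with h2 | h2 | h2 | h2 <;> rw [h1, h2] <;> decide

theorem uf_sub (f N : ℤ) : uf f (N - 4) = uf f N - 1 := by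
  unfold uf
  have : ((N - 4) * f) % 4 = (N * f) % 4 := by
    rw [show (N - 4) * f = N * f + 4 * (-f) by ring, Int.add_mul_emod_self_left]
  rw [this]; omega

theorem div_step (u f : ℤ) (hf : 1 ≤ f) : u / f - (u - 1) / f = if f ∣ u then 1 else 0 := by
  split_ifs with h
  · obtain ⟨c, rfl⟩ := h
    rw [Int.mul_ediv_cancel_left _ (by omega)]
    have : (f * c - 1) / f = c - 1 := by
      rw [Int.ediv_eq_iff_of_pos (by omega)]
      constructor <;> nlinarith
    omega
  · have h0 : u % f ≠ 0 := fun h' => h (Int.dvd_of_emod_eq_zero h')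
    have h1 := Int.emod_nonneg u (show f ≠ 0 by omega)
    have h2 := Int.emod_lt_of_pos u (show 0 < f by omega)
    have h3 := Int.emod_add_mul_ediv u f
    have : (u - 1) / f = u / f := by
      rw [Int.ediv_eq_iff_of_pos (by omega)]
      have : 1 ≤ u % f := by omega
      constructor <;> nlinarith
    omega

theorem cf_neg (f N : ℤ) (h : N < 0) : cf f N = 0 := by unfold cf; rw [if_pos h]

theorem cf_bd (f N : ℤ) (hf : 1 ≤ f) (hf2 : f % 2 = 1) (hN : 0 ≤ N) :
    N - 3 * f + 4 ≤ 4 * (f * cf f N) ∧ 4 * (f * cf f N) ≤ N + 4 * f := by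
  unfold cf
  rw [if_neg (by omega)]
  have h1 := uf_spec f N hf2
  have h2 : 0 ≤ (N * f) % 4 ∧ (N * f) % 4 ≤ 3 := by omega
  have h3 := Int.emod_add_mul_ediv (uf f N) f
  have h4 := Int.emod_nonneg (uf f N) (show f ≠ 0 by omega)
  have h5 := Int.emod_lt_of_pos (uf f N) (show 0 < f by omega)
  have h6 : f * ((N * f) % 4) ≤ f * 3 := by apply mul_le_mul_of_nonneg_left <;> omega
  have h7 : 0 ≤ f * ((N * f) % 4) := by apply mul_nonneg <;> omega
  rw [mul_add]
  constructor <;> linarith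

theorem cf_nonneg (f N : ℤ) (hf : 1 ≤ f) (hf2 : f % 2 = 1) : 0 ≤ cf f N := by
  rcases lt_or_ge N 0 with h | h
  · rw [cf_neg _ _ h]
  · have := (cf_bd f N hf hf2 h).1
    by_contra h'
    have : cf f N ≤ -1 := by omega
    nlinarith

theorem cf_step (f N : ℤ) (hf : 1 ≤ f) (hf2 : f % 2 = 1) : cf f N - cf f (N - 4) = ind f N := by
  rcases lt_or_ge N 0 with h | h
  · rw [cf_neg _ _ h, cf_neg _ _ (by omega)]; unfold ind; rw [if_neg (by omega)]; rfl
  · have hu : f ∣ uf f N ↔ f ∣ N := by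
      have hc : IsCoprime f 4 := by
        have : IsCoprime f 2 := by
          rw [Int.isCoprime_iff_gcd_eq_one, Int.gcd_comm]
          have := Int.isCoprime_iff_gcd_eq_one.1 (show IsCoprime (2 : ℤ) f from
            ⟨-(f / 2), 1, by omega⟩)
          exact this
        have h4 := this.pow_right (n := 2)
        norm_num at h4; exact h4
      have h1 := uf_spec f N hf2
      constructor
      · intro h'
        have : f ∣ 4 * uf f N + f * ((N * f) % 4) := dvd_add (h'.mul_left 4) (dvd_mul_right _ _)
        rw [h1] at this; simpa using this
      · intro h'
        have : f ∣ 4 * uf f N := by rw [h1]; exact dvd_sub h' (dvd_mul_right _ _)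
        exact hc.dvd_of_dvd_mul_left this
    have hi : ind f N = if f ∣ uf f N then 1 else 0 := by
      unfold ind; simp only [hu, h, true_and]
    have hs := div_step (uf f N) f hf
    rw [← hi, ← uf_sub] at hs
    have hcN : cf f N = uf f N / f + 1 := by unfold cf; rw [if_neg (by omega)]
    rcases lt_or_ge N 4 with h4 | h4
    · have : uf f (N - 4) / f = -1 := by
        rw [Int.ediv_eq_iff_of_pos (by omega), uf_sub]
        have h1 := uf_spec f N hf2
        have h2 : 0 ≤ (N * f) % 4 ∧ (N * f) % 4 ≤ 3 := by omega
        have h6 : f * ((N * f) % 4) ≤ f * 3 := by apply mul_le_mul_of_nonneg_left <;> omega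
        have h7 : 0 ≤ f * ((N * f) % 4) := by apply mul_nonneg <;> omega
        constructor <;> omega
      rw [cf_neg f (N - 4) (by omega)]; omega
    · have : cf f (N - 4) = uf f (N - 4) / f + 1 := by unfold cf; rw [if_neg (by omega)]
      omega

theorem cf_cmp (f N f' N' : ℤ) (hf : 1 ≤ f) (hf2 : f % 2 = 1) (hf' : f' % 2 = 1)
    (h1 : f ≤ f') (h2 : N' ≤ N) : cf f' N' ≤ cf f N + 1 := by
  have h0 := cf_nonneg f N hf hf2
  rcases lt_or_ge N' 0 with h | h
  · rw [cf_neg _ _ h]; omega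
  · have a := (cf_bd f' N' (by omega) hf' h).2
    have b := (cf_bd f N hf hf2 (by omega)).1
    by_contra hc
    have hc' : cf f N + 2 ≤ cf f' N' := by omega
    have c1 : f' * (cf f N + 2) ≤ f' * cf f' N' := mul_le_mul_of_nonneg_left hc' (by omega)
    have c2 : f * (cf f N + 1) ≤ f' * (cf f N + 1) := mul_le_mul_of_nonneg_right h1 (by omega)
    nlinarith

noncomputable def PS (θ : ℤ → ℤ) (b N : ℤ) : ℤ :=
  ∑ m ∈ Finset.Ico 1 b, θ m * cf (2 * m - 1) (N - emm m)

theorem PS_neg (θ : ℤ → ℤ) (b N : ℤ) (hN : N < 0) : PS θ b N = 0 := by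
  unfold PS
  apply Finset.sum_eq_zero
  intro m hm
  have := emm_nonneg m (Finset.mem_Ico.1 hm).1
  rw [cf_neg _ _ (by omega), mul_zero]

theorem PS_step (θ : ℤ → ℤ) (L N : ℤ) : PS θ (L + 1) N - PS θ (L + 1) (N - 4) = SS θ L N := by
  unfold PS SS
  rw [← Finset.sum_sub_distrib]
  apply Finset.sum_congr rfl
  intro m hm
  have := (Finset.mem_Ico.1 hm).1
  rw [← cf_step _ _ (by omega) (by omega), show N - emm m - 4 = N - 4 - emm m by ring]
  ring

theorem PS_one (θ : ℤ → ℤ) (N : ℤ) : PS θ 1 N = 0 := by simp [PS]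

theorem PS_even (θ : ℤ → ℤ) (j N : ℤ) (hj : 1 ≤ j) : PS θ (2 * j + 1) N =
    PS θ (2 * j) N + θ (2 * j) * cf (4 * j - 1) (N - (2 * j * j + 2 * j - 1)) := by
  unfold PS
  have : Finset.Ico 1 (2 * j + 1) = insert (2 * j) (Finset.Ico 1 (2 * j)) := by
    ext x; simp only [Finset.mem_Ico, Finset.mem_insert]; omega
  rw [this, Finset.sum_insert (by simp), emm_even, show 2 * (2 * j) - 1 = 4 * j - 1 by ring]; ring

theorem PS_odd (θ : ℤ → ℤ) (j N : ℤ) (hj : 0 ≤ j) : PS θ (2 * j + 2) N =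
    PS θ (2 * j + 1) N + θ (2 * j + 1) * cf (4 * j + 1) (N - (2 * j * j + 2 * j)) := by
  unfold PS
  have : Finset.Ico 1 (2 * j + 2) = insert (2 * j + 1) (Finset.Ico 1 (2 * j + 1)) := by
    ext x; simp only [Finset.mem_Ico, Finset.mem_insert]; omega
  rw [this, Finset.sum_insert (by simp), emm_odd, show 2 * (2 * j + 1) - 1 = 4 * j + 1 by ring]; ring

theorem PS_two (θ : ℤ → ℤ) (j N : ℤ) (hj : 1 ≤ j) : PS θ (2 * (j + 1)) N =
    PS θ (2 * j) N + θ (2 * j) * cf (4 * j - 1) (N - (2 * j * j + 2 * j - 1))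
      + θ (2 * j + 1) * cf (4 * j + 1) (N - (2 * j * j + 2 * j)) := by
  rw [show 2 * (j + 1) = 2 * j + 2 by ring, PS_odd θ j N (by omega), PS_even θ j N hj]

theorem PS_base (θ : ℤ → ℤ) (N : ℤ) : PS θ (2 * 1) N = θ 1 * cf 1 N := by
  have := PS_odd θ 0 N le_rfl
  norm_num at this
  rw [show (2 : ℤ) * 1 = 2 by norm_num, this, PS_one]; ring

def thA (m : ℤ) : ℤ := if m % 8 = 1 ∨ m % 8 = 4 ∨ m % 8 = 6 ∨ m % 8 = 7 then 1 else -1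
def thB (m : ℤ) : ℤ := if m % 8 = 2 ∨ m % 8 = 3 then 1 else if m % 8 = 6 ∨ m % 8 = 7 then -1 else 0

def mainA (N : ℤ) : ℤ := cf 1 N - cf 3 (N - 3) - cf 5 (N - 4)
def blkA (r N : ℤ) : ℤ := cf (16 * r + 7) (N - (32 * r * r + 40 * r + 11))
  - cf (16 * r + 9) (N - (32 * r * r + 40 * r + 12))
  + cf (16 * r + 11) (N - (32 * r * r + 56 * r + 23))
  + cf (16 * r + 13) (N - (32 * r * r + 56 * r + 24))
  - cf (16 * r + 15) (N - (32 * r * r + 72 * r + 39))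
  + cf (16 * r + 17) (N - (32 * r * r + 72 * r + 40))
  - cf (16 * r + 19) (N - (32 * r * r + 88 * r + 59))
  - cf (16 * r + 21) (N - (32 * r * r + 88 * r + 60))

def mainB (N : ℤ) : ℤ := cf 3 (N - 3) + cf 5 (N - 4) - cf 11 (N - 23) - cf 13 (N - 24)
def blkB (r N : ℤ) : ℤ := cf (16 * r + 19) (N - (32 * r * r + 88 * r + 59))
  + cf (16 * r + 21) (N - (32 * r * r + 88 * r + 60))
  - cf (16 * r + 27) (N - (32 * r * r + 120 * r + 111))
  - cf (16 * r + 29) (N - (32 * r * r + 120 * r + 112))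

theorem PS_A (R : ℕ) (N : ℤ) : PS thA (8 * R + 4) N = mainA N + ∑ r ∈ Finset.range R, blkA r N := by
  induction R with
  | zero =>
    have h := PS_two thA 1 N le_rfl
    rw [PS_base] at h
    have e1 : thA 1 = 1 := by decide
    have e2 : thA (2 * 1) = -1 := by decide
    have e3 : thA (2 * 1 + 1) = -1 := by decide
    rw [e1, e2, e3] at h
    norm_num at h
    norm_num [mainA]
    rw [h]; ring
  | succ R ih =>
    rw [Finset.sum_range_succ, ← add_assoc, ← ih]
    push_cast
    have hx : (0 : ℤ) ≤ R := by positivity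
    generalize (R : ℤ) = x at *
    have a1 := PS_two thA (4 * x + 2) N (by omega)
    have a2 := PS_two thA (4 * x + 2 + 1) N (by omega)
    have a3 := PS_two thA (4 * x + 2 + 1 + 1) N (by omega)
    have a4 := PS_two thA (4 * x + 2 + 1 + 1 + 1) N (by omega)
    have e4 : thA (2 * (4 * x + 2)) = 1 := by unfold thA; rw [if_pos (by omega)]
    have e5 : thA (2 * (4 * x + 2) + 1) = -1 := by unfold thA; rw [if_neg (by omega)]
    have e6 : thA (2 * (4 * x + 2 + 1)) = 1 := by unfold thA; rw [if_pos (by omega)]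
    have e7 : thA (2 * (4 * x + 2 + 1) + 1) = 1 := by unfold thA; rw [if_pos (by omega)]
    have e8 : thA (2 * (4 * x + 2 + 1 + 1)) = -1 := by unfold thA; rw [if_neg (by omega)]
    have e9 : thA (2 * (4 * x + 2 + 1 + 1) + 1) = 1 := by unfold thA; rw [if_pos (by omega)]
    have e10 : thA (2 * (4 * x + 2 + 1 + 1 + 1)) = -1 := by unfold thA; rw [if_neg (by omega)]
    have e11 : thA (2 * (4 * x + 2 + 1 + 1 + 1) + 1) = -1 := by unfold thA; rw [if_neg (by omega)]
    rw [e4, e5] at a1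
    rw [e6, e7] at a2
    rw [e8, e9] at a3
    rw [e10, e11] at a4
    rw [show 8 * (x + 1) + 4 = 2 * (4 * x + 2 + 1 + 1 + 1 + 1) by ring, a4, a3, a2, a1,
      show 8 * x + 4 = 2 * (4 * x + 2) by ring]
    unfold blkA
    ring_nf

theorem PS_B (R : ℕ) (N : ℤ) : PS thB (8 * R + 8) N = mainB N + ∑ r ∈ Finset.range R, blkB r N := by
  induction R with
  | zero =>
    have h1 := PS_two thB 1 N le_rfl
    have h2 := PS_two thB 2 N (by norm_num)
    have h3 := PS_two thB 3 N (by norm_num)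
    rw [PS_base] at h1
    have e1 : thB 1 = 0 := by decide
    have e2 : thB 2 = 1 := by decide
    have e3 : thB 3 = 1 := by decide
    have e4 : thB 4 = 0 := by decide
    have e5 : thB 5 = 0 := by decide
    have e6 : thB 6 = -1 := by decide
    have e7 : thB 7 = -1 := by decide
    norm_num [e1, e2, e3, e4, e5, e6, e7] at h1 h2 h3
    norm_num [mainB]
    rw [h3, h2, h1]; ring
  | succ R ih =>
    rw [Finset.sum_range_succ, ← add_assoc, ← ih]
    push_cast
    have hx : (0 : ℤ) ≤ R := by positivity
    generalize (R : ℤ) = x at *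
    have a1 := PS_two thB (4 * x + 4) N (by omega)
    have a2 := PS_two thB (4 * x + 4 + 1) N (by omega)
    have a3 := PS_two thB (4 * x + 4 + 1 + 1) N (by omega)
    have a4 := PS_two thB (4 * x + 4 + 1 + 1 + 1) N (by omega)
    have e4 : thB (2 * (4 * x + 4)) = 0 := by unfold thB; rw [if_neg (by omega), if_neg (by omega)]
    have e5 : thB (2 * (4 * x + 4) + 1) = 0 := by unfold thB; rw [if_neg (by omega), if_neg (by omega)]
    have e6 : thB (2 * (4 * x + 4 + 1)) = 1 := by unfold thB; rw [if_pos (by omega)]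
    have e7 : thB (2 * (4 * x + 4 + 1) + 1) = 1 := by unfold thB; rw [if_pos (by omega)]
    have e8 : thB (2 * (4 * x + 4 + 1 + 1)) = 0 := by unfold thB; rw [if_neg (by omega), if_neg (by omega)]
    have e9 : thB (2 * (4 * x + 4 + 1 + 1) + 1) = 0 := by unfold thB; rw [if_neg (by omega), if_neg (by omega)]
    have e10 : thB (2 * (4 * x + 4 + 1 + 1 + 1)) = -1 := by unfold thB; rw [if_neg (by omega), if_pos (by omega)]
    have e11 : thB (2 * (4 * x + 4 + 1 + 1 + 1) + 1) = -1 := by unfold thB; rw [if_neg (by omega), if_pos (by omega)]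
    rw [e4, e5] at a1
    rw [e6, e7] at a2
    rw [e8, e9] at a3
    rw [e10, e11] at a4
    rw [show 8 * (x + 1) + 8 = 2 * (4 * x + 4 + 1 + 1 + 1 + 1) by ring, a4, a3, a2, a1,
      show 8 * x + 8 = 2 * (4 * x + 4) by ring]
    unfold blkB
    ring_nf

theorem blkA_ge (r : ℕ) (N : ℤ) : -4 ≤ blkA r N := by
  unfold blkA
  have hr : (0 : ℤ) ≤ r := by positivity
  generalize (r : ℤ) = x at *
  have h1 := cf_cmp (16 * x + 7) (N - (32 * x * x + 40 * x + 11)) (16 * x + 9)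
    (N - (32 * x * x + 40 * x + 12)) (by omega) (by omega) (by omega) (by omega) (by linarith)
  have h2 := cf_cmp (16 * x + 11) (N - (32 * x * x + 56 * x + 23)) (16 * x + 15)
    (N - (32 * x * x + 72 * x + 39)) (by omega) (by omega) (by omega) (by omega) (by linarith)
  have h3 := cf_cmp (16 * x + 13) (N - (32 * x * x + 56 * x + 24)) (16 * x + 19)
    (N - (32 * x * x + 88 * x + 59)) (by omega) (by omega) (by omega) (by omega) (by linarith)
  have h4 := cf_cmp (16 * x + 17) (N - (32 * x * x + 72 * x + 40)) (16 * x + 21)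
    (N - (32 * x * x + 88 * x + 60)) (by omega) (by omega) (by omega) (by omega) (by linarith)
  linarith

theorem blkB_ge (r : ℕ) (N : ℤ) : -2 ≤ blkB r N := by
  unfold blkB
  have hr : (0 : ℤ) ≤ r := by positivity
  generalize (r : ℤ) = x at *
  have h1 := cf_cmp (16 * x + 19) (N - (32 * x * x + 88 * x + 59)) (16 * x + 27)
    (N - (32 * x * x + 120 * x + 111)) (by omega) (by omega) (by omega) (by omega) (by linarith)
  have h2 := cf_cmp (16 * x + 21) (N - (32 * x * x + 88 * x + 60)) (16 * x + 29)
    (N - (32 * x * x + 120 * x + 112)) (by omega) (by omega) (by omega) (by omega) (by linarith)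
  linarith

theorem blkA_nn (r : ℕ) (N : ℤ) (h : N < 84 * r) : 0 ≤ blkA r N := by
  unfold blkA
  have hr : (0 : ℤ) ≤ r := by positivity
  have hq : 84 * (r : ℤ) ≤ 32 * r * r + 40 * r + 12 := by
    rcases Nat.lt_or_ge r 1 with h0 | h0
    · have : r = 0 := by omega
      subst this; norm_num
    · have : (1 : ℤ) ≤ r := by exact_mod_cast h0
      nlinarith
  generalize (r : ℤ) = x at *
  rw [cf_neg (16 * x + 9) _ (by linarith), cf_neg (16 * x + 15) _ (by linarith),
    cf_neg (16 * x + 19) _ (by linarith), cf_neg (16 * x + 21) _ (by linarith)]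
  have h1 := cf_nonneg (16 * x + 7) (N - (32 * x * x + 40 * x + 11)) (by omega) (by omega)
  have h2 := cf_nonneg (16 * x + 11) (N - (32 * x * x + 56 * x + 23)) (by omega) (by omega)
  have h3 := cf_nonneg (16 * x + 13) (N - (32 * x * x + 56 * x + 24)) (by omega) (by omega)
  have h4 := cf_nonneg (16 * x + 17) (N - (32 * x * x + 72 * x + 40)) (by omega) (by omega)
  linarith

theorem blkB_nn (r : ℕ) (N : ℤ) (h : N < 111 * (r + 1)) : 0 ≤ blkB r N := by
  unfold blkB
  have hr : (0 : ℤ) ≤ r := by positivity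
  generalize (r : ℤ) = x at *
  have hq : 0 ≤ x * x := mul_nonneg hr hr
  rw [cf_neg (16 * x + 27) _ (by linarith), cf_neg (16 * x + 29) _ (by linarith)]
  have h1 := cf_nonneg (16 * x + 19) (N - (32 * x * x + 88 * x + 59)) (by omega) (by omega)
  have h2 := cf_nonneg (16 * x + 21) (N - (32 * x * x + 88 * x + 60)) (by omega) (by omega)
  linarith

theorem sumA_ge (R : ℕ) (N : ℤ) (hN : 0 ≤ N) :
    -4 * (N / 84 + 1) ≤ ∑ r ∈ Finset.range R, blkA r N := by
  have : -4 * (if (R : ℤ) ≤ N / 84 + 1 then (R : ℤ) else N / 84 + 1) ≤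
      ∑ r ∈ Finset.range R, blkA r N := by
    induction R with
    | zero => rw [if_pos (by push_cast; omega)]; simp
    | succ R ih =>
      rw [Finset.sum_range_succ]
      have h1 := blkA_ge R N
      have h2 := blkA_nn R N
      push_cast
      split_ifs at ih ⊢ with h3 h4 <;> omega
  split_ifs at this <;> omega

theorem sumB_ge (R : ℕ) (N : ℤ) (hN : 0 ≤ N) :
    -2 * (N / 111) ≤ ∑ r ∈ Finset.range R, blkB r N := by
  have : -2 * (if (R : ℤ) ≤ N / 111 then (R : ℤ) else N / 111) ≤
      ∑ r ∈ Finset.range R, blkB r N := by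
    induction R with
    | zero => rw [if_pos (by push_cast; omega)]; simp
    | succ R ih =>
      rw [Finset.sum_range_succ]
      have h1 := blkB_ge R N
      have h2 := blkB_nn R N
      push_cast
      split_ifs at ih ⊢ with h3 h4 <;> omega
  split_ifs at this <;> omega

theorem smallA : ∀ N ∈ Finset.range 80, 0 ≤ mainA N + blkA 0 N ∧
    (36 ≤ N → 0 < mainA N + blkA 0 N) := by decide +kernel
theorem smallB : ∀ N ∈ Finset.range 59, 0 ≤ mainB N ∧ (36 ≤ N → 0 < mainB N) := by decide +kernel

theorem blkA_zero (r : ℕ) (N : ℤ) (hr : 1 ≤ r) (hN : N < 80) : blkA r N = 0 := by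
  unfold blkA
  have hr : (1 : ℤ) ≤ r := by exact_mod_cast hr
  generalize (r : ℤ) = x at *
  have hq : 1 ≤ x * x := by nlinarith
  rw [cf_neg, cf_neg, cf_neg, cf_neg, cf_neg, cf_neg, cf_neg, cf_neg]
  · norm_num
  all_goals linarith

theorem blkB_zero (r : ℕ) (N : ℤ) (hN : N < 59) : blkB r N = 0 := by
  unfold blkB
  have hr : (0 : ℤ) ≤ r := by positivity
  generalize (r : ℤ) = x at *
  have hq : 0 ≤ x * x := by nlinarith
  rw [cf_neg, cf_neg, cf_neg, cf_neg]
  · norm_num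
  all_goals linarith

theorem PSA_pos (R : ℕ) (hR : 1 ≤ R) (N : ℤ) (hN : 0 ≤ N) :
    0 ≤ PS thA (8 * R + 4) N ∧ (36 ≤ N → 0 < PS thA (8 * R + 4) N) := by
  rw [PS_A]
  rcases lt_or_ge N 80 with h | h
  · have hs : ∑ r ∈ Finset.range R, blkA r N = blkA 0 N := by
      rw [Finset.sum_eq_single 0]
      · norm_num
      · intro r _ hr; exact blkA_zero r N (by omega) h
      · intro h0; exact absurd (Finset.mem_range.2 (by omega)) h0
    rw [hs]
    obtain ⟨k, rfl⟩ : ∃ k : ℕ, N = k := ⟨N.toNat, by omega⟩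
    have := smallA k (Finset.mem_range.2 (by omega))
    exact ⟨this.1, fun h36 => this.2 (by omega)⟩
  · have h1 := sumA_ge R N hN
    have b1 := cf_bd 1 N (by norm_num) (by norm_num) hN
    have b2 := cf_bd 3 (N - 3) (by norm_num) (by norm_num) (by omega)
    have b3 := cf_bd 5 (N - 4) (by norm_num) (by norm_num) (by omega)
    unfold mainA
    constructor <;> omega

theorem PSB_pos (R : ℕ) (N : ℤ) (hN : 0 ≤ N) :
    0 ≤ PS thB (8 * R + 8) N ∧ (36 ≤ N → 0 < PS thB (8 * R + 8) N) := by
  rw [PS_B]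
  rcases lt_or_ge N 59 with h | h
  · have hs : ∑ r ∈ Finset.range R, blkB r N = 0 := by
      apply Finset.sum_eq_zero
      intro r _; exact blkB_zero r N h
    rw [hs, add_zero]
    obtain ⟨k, rfl⟩ : ∃ k : ℕ, N = k := ⟨N.toNat, by omega⟩
    have := smallB k (Finset.mem_range.2 (by omega))
    exact ⟨this.1, fun h36 => this.2 (by omega)⟩
  · have h1 := sumB_ge R N hN
    have b1 := cf_bd 3 (N - 3) (by norm_num) (by norm_num) (by omega)
    have b2 := cf_bd 5 (N - 4) (by norm_num) (by norm_num) (by omega)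
    have b3 := cf_bd 11 (N - 23) (by norm_num) (by norm_num) (by omega)
    have b4 := cf_bd 13 (N - 24) (by norm_num) (by norm_num) (by omega)
    unfold mainB
    constructor <;> omega

noncomputable def cc (m n : ℤ) : ℤ := ∑ s ∈ FS n, if rkMS s = m then (1 : ℤ) else 0

theorem cc_gg (m n : ℤ) : cc m n = gg m n - gg (m - 1) n := by
  unfold cc gg
  rw [← Finset.sum_sub_distrib]
  apply Finset.sum_congr rfl
  intro s _
  split_ifs <;> omega

theorem cc_hh (m n : ℤ) : cc m n = hh (m - 1) n - hh m n := by
  unfold cc hh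
  rw [← Finset.sum_sub_distrib]
  apply Finset.sum_congr rfl
  intro s _
  split_ifs <;> omega

theorem cc_symm (m n : ℤ) : cc (-m) n = cc m n := by
  rw [cc_gg, cc_hh, hh_symm, hh_symm, show -1 - (m - 1) = -m by ring,
    show -1 - m = -m - 1 by ring]

theorem TT_cc (f : ℤ → ℤ) (n : ℤ) : TT f n = ∑ m ∈ Finset.Icc (-n) n, f m * cc m n := by
  unfold TT cc
  simp only [Finset.mul_sum]
  rw [Finset.sum_comm]
  apply Finset.sum_congr rfl
  intro s hs
  have hb := rk_bound s n hs
  rw [Finset.sum_eq_single (rkMS s)]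
  · rw [if_pos rfl, mul_one]
  · intro m _ hm; rw [if_neg (fun h => hm h.symm), mul_zero]
  · intro h; exact absurd (Finset.mem_Icc.2 ⟨hb.2.1, hb.2.2⟩) h

theorem TT_symm (f : ℤ → ℤ) (n : ℤ) : TT (fun m => f (-m)) n = TT f n := by
  rw [TT_cc, TT_cc]
  refine Finset.sum_bij' (fun m _ => -m) (fun m _ => -m) ?_ ?_ ?_ ?_ ?_
  · intro m hm; simp only [Finset.mem_Icc] at hm ⊢; omega
  · intro m hm; simp only [Finset.mem_Icc] at hm ⊢; omega
  · intro m _; ring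
  · intro m _; ring
  · intro m _; simp only [cc_symm]

theorem N2_TT (r : ℤ) (n : ℕ) : (N2 r 8 n : ℤ) = TT (fun m => if m % 8 = r % 8 then 1 else 0) n := by
  unfold TT N2
  rw [← Finset.sum_filter, Finset.sum_const, nsmul_eq_mul, mul_one]
  congr 1
  rw [← Nat.card_eq_finsetCard]
  have hmem : ∀ P : n.Partition, (NoRepeatedOddParts P ∧ m2Rank P ≡ r [ZMOD ((8 : ℕ) : ℤ)]) →
      P.parts ∈ (FS n).filter (fun s => rkMS s % 8 = r % 8) := by
    rintro P ⟨h1, h2⟩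
    rw [Finset.mem_filter, mem_FS]
    refine ⟨⟨⟨fun h0 => ?_, h1⟩, ?_⟩, h2⟩
    · exact absurd (P.parts_pos h0) (lt_irrefl 0)
    · rw [P.parts_sum]
  apply Nat.card_eq_of_bijective (fun P => ⟨P.1.parts, hmem P.1 P.2⟩)
  constructor
  · rintro ⟨P, hP⟩ ⟨Q, hQ⟩ h
    have h' : P.parts = Q.parts := congrArg Subtype.val h
    exact Subtype.ext (Nat.Partition.ext h')
  · rintro ⟨s, hs⟩
    have hs' := hs
    rw [Finset.mem_filter, mem_FS] at hs'
    obtain ⟨⟨hg, hsum⟩, hr⟩ := hs'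
    refine ⟨⟨⟨s, ?_, ?_⟩, hg.2, hr⟩, rfl⟩
    · intro i hi
      rcases Nat.eq_zero_or_pos i with h0 | h0
      · subst h0; exact absurd hi hg.1
      · exact h0
    · exact_mod_cast hsum

def chA (m : ℤ) : ℤ := if m % 8 = 0 then 1 else if m % 8 = 4 then -1 else 0
def chB (m : ℤ) : ℤ := if m % 8 = 1 then 1 else if m % 8 = 5 then -1 else 0

theorem chA_anti (m : ℤ) : chA (m + 4) = - chA m := by
  unfold chA; split_ifs <;> omega
theorem chB_anti (m : ℤ) : chB (m + 4) = - chB m := by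
  unfold chB; split_ifs <;> omega

theorem chA_val (m i : ℤ) (h : m % 8 = i) : chA m = chA i := by
  unfold chA; rw [h, show i % 8 = i by omega]
theorem chB_val (m i : ℤ) (h : m % 8 = i) : chB m = chB i := by
  unfold chB; rw [h, show i % 8 = i by omega]
theorem thA_val (m i : ℤ) (h : m % 8 = i) : thA m = thA i := by
  unfold thA; rw [h, show i % 8 = i by omega]
theorem thB_val (m i : ℤ) (h : m % 8 = i) : thB m = thB i := by
  unfold thB; rw [h, show i % 8 = i by omega]
theorem sgw_val (m i : ℤ) (h : m % 8 = i) : sgw m = sgw i := by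
  unfold sgw; rw [show m % 4 = i % 4 by omega]

theorem hthA (m : ℤ) : (((chA m + chA (m + 2)) - (chA (m + 1) + chA (m + 1 + 2))) +
      ((chA (1 - m) + chA (1 - m + 2)) - (chA (1 - m + 1) + chA (1 - m + 1 + 2)))) * sgw m = 2 * thA m := by
  obtain ⟨i, hi⟩ : ∃ i, m % 8 = i := ⟨_, rfl⟩
  rw [chA_val m i hi, sgw_val m i hi, thA_val m i hi,
    chA_val (m + 2) ((i + 2) % 8) (by omega), chA_val (m + 1) ((i + 1) % 8) (by omega),
    chA_val (m + 1 + 2) ((i + 3) % 8) (by omega), chA_val (1 - m) ((1 - i) % 8) (by omega),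
    chA_val (1 - m + 2) ((3 - i) % 8) (by omega), chA_val (1 - m + 1) ((2 - i) % 8) (by omega),
    chA_val (1 - m + 1 + 2) ((4 - i) % 8) (by omega)]
  have : 0 ≤ i ∧ i < 8 := by omega
  clear hi
  obtain ⟨h1, h2⟩ := this
  interval_cases i <;> decide

theorem hthB (m : ℤ) : (((chB m + chB (m + 2)) - (chB (m + 1) + chB (m + 1 + 2))) +
      ((chB (1 - m) + chB (1 - m + 2)) - (chB (1 - m + 1) + chB (1 - m + 1 + 2)))) * sgw m = 2 * thB m := by
  obtain ⟨i, hi⟩ : ∃ i, m % 8 = i := ⟨_, rfl⟩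
  rw [chB_val m i hi, sgw_val m i hi, thB_val m i hi,
    chB_val (m + 2) ((i + 2) % 8) (by omega), chB_val (m + 1) ((i + 1) % 8) (by omega),
    chB_val (m + 1 + 2) ((i + 3) % 8) (by omega), chB_val (1 - m) ((1 - i) % 8) (by omega),
    chB_val (1 - m + 2) ((3 - i) % 8) (by omega), chB_val (1 - m + 1) ((2 - i) % 8) (by omega),
    chB_val (1 - m + 1 + 2) ((4 - i) % 8) (by omega)]
  have : 0 ≤ i ∧ i < 8 := by omega
  clear hi
  obtain ⟨h1, h2⟩ := this
  interval_cases i <;> decide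

theorem TT_ge (χ θ : ℤ → ℤ) (h : ∀ m, χ (m + 4) = - χ m)
    (hθ : ∀ m, (((χ m + χ (m + 2)) - (χ (m + 1) + χ (m + 1 + 2))) +
      ((χ (1 - m) + χ (1 - m + 2)) - (χ (1 - m + 1) + χ (1 - m + 1 + 2)))) * sgw m = 2 * θ m)
    (n L : ℤ) (hn : 0 ≤ n) (hL : 3 * n + 10 ≤ L) (hp : ∀ x, 0 ≤ x → 0 ≤ PS θ (L + 1) x) :
    PS θ (L + 1) n ≤ TT χ n := by
  apply lower (TT χ) (SS θ L) (PS θ (L + 1)) n hn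
  · apply inversion _ _ n hn (fun x hx => TT_neg χ x hx)
    intro x hx
    exact E1S χ θ h hθ x L (by omega) (by omega)
  · intro x hx; exact PS_neg _ _ _ hx
  · intro x _
    rcases lt_or_ge x 0 with h0 | h0
    · rw [PS_neg _ _ _ h0]
    · exact hp x h0
  · intro x _; exact PS_step θ L x

theorem TT_sub (f g : ℤ → ℤ) (n : ℤ) : TT f n - TT g n = TT (fun m => f m - g m) n := by
  unfold TT; rw [Finset.sum_sub_distrib]

theorem N2_mod8_inequalities (n : ℕ) (hn : 36 ≤ n) :
    N2 4 8 n < N2 0 8 n ∧ N2 3 8 n < N2 1 8 n := by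
  have hn' : (36 : ℤ) ≤ n := by exact_mod_cast hn
  constructor
  · have hA := TT_ge chA thA chA_anti hthA n (8 * ((n + 2 : ℕ) : ℤ) + 3) (by omega) (by push_cast; omega)
      (fun x hx => (PSA_pos (n + 2) (by omega) x hx).1)
    have hP := (PSA_pos (n + 2) (by omega) n (by omega)).2 hn'
    rw [show 8 * ((n + 2 : ℕ) : ℤ) + 3 + 1 = 8 * ((n + 2 : ℕ) : ℤ) + 4 by ring] at hA
    have h2 : (N2 0 8 n : ℤ) - N2 4 8 n = TT chA n := by
      rw [N2_TT, N2_TT, TT_sub]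
      congr 1
      funext m
      unfold chA
      split_ifs <;> omega
    omega
  · have hB := TT_ge chB thB chB_anti hthB n (8 * ((n + 2 : ℕ) : ℤ) + 7) (by omega) (by push_cast; omega)
      (fun x hx => (PSB_pos (n + 2) x hx).1)
    have hP := (PSB_pos (n + 2) n (by omega)).2 hn'
    rw [show 8 * ((n + 2 : ℕ) : ℤ) + 7 + 1 = 8 * ((n + 2 : ℕ) : ℤ) + 8 by ring] at hB
    have h2 : (N2 1 8 n : ℤ) - N2 3 8 n = TT chB n := by
      rw [N2_TT, N2_TT, ← TT_symm (fun m => if m % 8 = 3 % 8 then 1 else 0), TT_sub]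
      congr 1
      funext m
      unfold chB
      split_ifs <;> omega
    omega
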